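/- arXiv:2503.11506 — 4 statements merged into one kernel-verified Lean document; each statement's English description precedes it below -/
import Mathlib

section
/- Let k, n ≥ 1 and 0 < γ ≤ 1/2. Then π_k^γ(ℍ^n) = 0. Concretely: every map f : S^k → ℝ^{2n+1} (S^k the unit sphere in ℝ^{k+1}) which is γ-Hölder as a map into ℍ^n (d_K(f(x), f(y)) ≤ C·|x−y|^γ for some C and all x, y ∈ S^k) admits an extension F : B̄^{k+1} → ℝ^{2n+1} with F restricted to S^k equal to f and F γ-Hölder as a map into ℍ^n (d_K(F(x), F(y)) ≤ C'·|x−y|^γ for some C' and all x, y in the closed unit ball B̄^{k+1}). -/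
open Metric Set MeasureTheory Topology

/-- The index of the coordinate `x_j` in `ℝ^{2n+1}`. -/
def xI (n : ℕ) (j : Fin n) : Fin (2*n+1) := ⟨2*j.1, by have := j.2; omega⟩

/-- The index of the coordinate `y_j` in `ℝ^{2n+1}`. -/
def yI (n : ℕ) (j : Fin n) : Fin (2*n+1) := ⟨2*j.1+1, by have := j.2; omega⟩

/-- The index of the coordinate `t` in `ℝ^{2n+1}`. -/
def tI (n : ℕ) : Fin (2*n+1) := Fin.last (2*n)

/-- The Korányi metric on the Heisenberg group `ℍ^n = ℝ^{2n+1}`: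
`d_K(p,q) = (|z-z'|^4 + |t - t' + 2 ∑_j (x_j' y_j - x_j y_j')|^2)^{1/4}`. -/
noncomputable def dK (n : ℕ) (p q : EuclideanSpace ℝ (Fin (2*n+1))) : ℝ :=
  ((∑ i : Fin (2*n), (p (Fin.castSucc i) - q (Fin.castSucc i)) ^ 2) ^ 2 +
    (p (tI n) - q (tI n) +
      2 * ∑ j : Fin n, (q (xI n j) * p (yI n j) - p (xI n j) * q (yI n j))) ^ 2) ^ ((1:ℝ)/4)

/-- The squared Euclidean distance of the horizontal parts of two points of `ℍ^n`. -/
noncomputable def horizontalSq (n : ℕ) (p q : EuclideanSpace ℝ (Fin (2*n+1))) : ℝ :=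
  ∑ i : Fin (2*n), (p (Fin.castSucc i) - q (Fin.castSucc i)) ^ 2

/-- The symplectic form on the horizontal parts of two points of `ℍ^n`. -/
noncomputable def symplecticForm (n : ℕ) (p q : EuclideanSpace ℝ (Fin (2*n+1))) : ℝ :=
  ∑ j : Fin n, (q (xI n j) * p (yI n j) - p (xI n j) * q (yI n j))

/-- The vertical displacement of two points of `ℍ^n`. -/
noncomputable def verticalDisplacement (n : ℕ) (p q : EuclideanSpace ℝ (Fin (2*n+1))) : ℝ :=
  p (tI n) - q (tI n) + 2 * symplecticForm n p q

/-- The Heisenberg dilation `(z, t) ↦ (r z, r² t)`. -/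
noncomputable def heisenbergDilation (n : ℕ) (r : ℝ) (p : EuclideanSpace ℝ (Fin (2*n+1))) :
    EuclideanSpace ℝ (Fin (2*n+1)) :=
  WithLp.toLp 2 fun i => if i = tI n then r ^ 2 * p i else r * p i

lemma xI_ne_tI (n : ℕ) (j : Fin n) : xI n j ≠ tI n := by
  have := j.2
  simp only [xI, tI, ne_eq, Fin.ext_iff, Fin.val_last]
  omega

lemma yI_ne_tI (n : ℕ) (j : Fin n) : yI n j ≠ tI n := by
  have := j.2
  simp only [yI, tI, ne_eq, Fin.ext_iff, Fin.val_last]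
  omega

lemma heisenbergDilation_apply_tI (n : ℕ) (r : ℝ) (p : EuclideanSpace ℝ (Fin (2*n+1))) :
    heisenbergDilation n r p (tI n) = r ^ 2 * p (tI n) := by
  simp [heisenbergDilation]

lemma heisenbergDilation_apply_of_ne (n : ℕ) (r : ℝ) (p : EuclideanSpace ℝ (Fin (2*n+1)))
    {i : Fin (2*n+1)} (hi : i ≠ tI n) : heisenbergDilation n r p i = r * p i := by
  simp [heisenbergDilation, hi]

lemma heisenbergDilation_one (n : ℕ) (p : EuclideanSpace ℝ (Fin (2*n+1))) :
    heisenbergDilation n 1 p = p := by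
  ext i
  simp [heisenbergDilation]

lemma horizontalSq_nonneg (n : ℕ) (p q : EuclideanSpace ℝ (Fin (2*n+1))) :
    0 ≤ horizontalSq n p q :=
  Finset.sum_nonneg fun _ _ => sq_nonneg _

lemma dK_nonneg (n : ℕ) (p q : EuclideanSpace ℝ (Fin (2*n+1))) : 0 ≤ dK n p q := by
  unfold dK
  positivity

lemma dK_pow_four (n : ℕ) (p q : EuclideanSpace ℝ (Fin (2*n+1))) :
    dK n p q ^ 4 = horizontalSq n p q ^ 2 + verticalDisplacement n p q ^ 2 := by
  unfold dK horizontalSq verticalDisplacement symplecticForm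
  rw [← Real.rpow_natCast, ← Real.rpow_mul (by positivity)]
  norm_num

lemma horizontalSq_le_sq_of_dK_le {n : ℕ} {p q : EuclideanSpace ℝ (Fin (2*n+1))} {K : ℝ}
    (h : dK n p q ≤ K) : horizontalSq n p q ≤ K ^ 2 := by
  have h4 : dK n p q ^ 4 ≤ K ^ 4 := pow_le_pow_left₀ (dK_nonneg n p q) h 4
  rw [dK_pow_four] at h4
  refine (le_abs_self _).trans (abs_le_of_sq_le_sq ?_ (sq_nonneg K))
  nlinarith [sq_nonneg (verticalDisplacement n p q)]

lemma abs_verticalDisplacement_le_sq_of_dK_le {n : ℕ} {p q : EuclideanSpace ℝ (Fin (2*n+1))}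
    {K : ℝ} (h : dK n p q ≤ K) : |verticalDisplacement n p q| ≤ K ^ 2 := by
  have h4 : dK n p q ^ 4 ≤ K ^ 4 := pow_le_pow_left₀ (dK_nonneg n p q) h 4
  rw [dK_pow_four] at h4
  apply abs_le_of_sq_le_sq _ (sq_nonneg K)
  nlinarith [sq_nonneg (horizontalSq n p q)]

lemma dK_le_two_mul {n : ℕ} {p q : EuclideanSpace ℝ (Fin (2*n+1))} {K : ℝ} (hK : 0 ≤ K)
    (hh : horizontalSq n p q ≤ K ^ 2) (hv : |verticalDisplacement n p q| ≤ K ^ 2) :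
    dK n p q ≤ 2 * K := by
  apply le_of_pow_le_pow_left₀ (n := 4) (by norm_num) (by positivity)
  rw [dK_pow_four]
  have h1 := pow_le_pow_left₀ (horizontalSq_nonneg n p q) hh 2
  have h2 := pow_le_pow_left₀ (abs_nonneg _) hv 2
  rw [sq_abs] at h2
  nlinarith [pow_nonneg hK 4]

lemma abs_symplecticForm_le {n : ℕ} {p q : EuclideanSpace ℝ (Fin (2*n+1))} {M : ℝ}
    (hp : ∀ i, i ≠ tI n → |p i| ≤ M) (hq : ∀ i, i ≠ tI n → |q i| ≤ M) :
    |symplecticForm n p q| ≤ n * (2 * M ^ 2) := by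
  have key : ∀ j : Fin n,
      |q (xI n j) * p (yI n j) - p (xI n j) * q (yI n j)| ≤ 2 * M ^ 2 := by
    intro j
    have hM : 0 ≤ M := (abs_nonneg _).trans (hp _ (xI_ne_tI n j))
    calc _ ≤ |q (xI n j) * p (yI n j)| + |p (xI n j) * q (yI n j)| := abs_sub _ _
      _ = |q (xI n j)| * |p (yI n j)| + |p (xI n j)| * |q (yI n j)| := by rw [abs_mul, abs_mul]
      _ ≤ M * M + M * M := by
          gcongr
          exacts [hq _ (xI_ne_tI n j), hp _ (yI_ne_tI n j), hp _ (xI_ne_tI n j),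
            hq _ (yI_ne_tI n j)]
      _ = 2 * M ^ 2 := by ring
  calc _ ≤ ∑ j : Fin n, |q (xI n j) * p (yI n j) - p (xI n j) * q (yI n j)| :=
        Finset.abs_sum_le_sum_abs _ _
    _ ≤ ∑ _j : Fin n, 2 * M ^ 2 := Finset.sum_le_sum fun j _ => key j
    _ = _ := by simp

lemma symplecticForm_heisenbergDilation (n : ℕ) (r s : ℝ)
    (p q : EuclideanSpace ℝ (Fin (2*n+1))) :
    symplecticForm n (heisenbergDilation n r p) (heisenbergDilation n s q) =
      r * s * symplecticForm n p q := by
  unfold symplecticForm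
  rw [Finset.mul_sum]
  refine Finset.sum_congr rfl fun j _ => ?_
  simp only [heisenbergDilation_apply_of_ne n _ _ (xI_ne_tI n j),
    heisenbergDilation_apply_of_ne n _ _ (yI_ne_tI n j)]
  ring

lemma horizontalSq_heisenbergDilation_le {n : ℕ} {r s M : ℝ}
    {p : EuclideanSpace ℝ (Fin (2*n+1))} (q : EuclideanSpace ℝ (Fin (2*n+1)))
    (hp : ∀ i, |p i| ≤ M) :
    horizontalSq n (heisenbergDilation n r p) (heisenbergDilation n s q) ≤
      4 * n * M ^ 2 * (r - s) ^ 2 + 2 * (s ^ 2 * horizontalSq n p q) := by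
  have key : ∀ i : Fin (2*n),
      (heisenbergDilation n r p i.castSucc - heisenbergDilation n s q i.castSucc) ^ 2 ≤
        2 * M ^ 2 * (r - s) ^ 2 + 2 * s ^ 2 * (p i.castSucc - q i.castSucc) ^ 2 := by
    intro i
    have hi : i.castSucc ≠ tI n := (Fin.castSucc_lt_last i).ne
    rw [heisenbergDilation_apply_of_ne n _ _ hi, heisenbergDilation_apply_of_ne n _ _ hi]
    have hM : p i.castSucc ^ 2 ≤ M ^ 2 := sq_le_sq' (abs_le.1 (hp _)).1 (abs_le.1 (hp _)).2
    nlinarith [mul_le_mul_of_nonneg_right hM (sq_nonneg (r - s)),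
      sq_nonneg ((r - s) * p i.castSucc - s * (p i.castSucc - q i.castSucc))]
  unfold horizontalSq
  refine (Finset.sum_le_sum fun i _ => key i).trans (le_of_eq ?_)
  rw [Finset.sum_add_distrib, ← Finset.mul_sum Finset.univ
    (fun i : Fin (2*n) => (p i.castSucc - q i.castSucc) ^ 2), Finset.sum_const, Finset.card_univ,
    Fintype.card_fin, nsmul_eq_mul]
  push_cast
  ring

lemma verticalDisplacement_heisenbergDilation (n : ℕ) (r s : ℝ)
    (p q : EuclideanSpace ℝ (Fin (2*n+1))) :
    verticalDisplacement n (heisenbergDilation n r p) (heisenbergDilation n s q) =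
      s ^ 2 * verticalDisplacement n p q +
        (r - s) * ((r + s) * p (tI n) + 2 * s * symplecticForm n p q) := by
  unfold verticalDisplacement
  rw [symplecticForm_heisenbergDilation, heisenbergDilation_apply_tI,
    heisenbergDilation_apply_tI]
  ring

/-- A set of bounded Korányi distance to a point has bounded coordinates. -/
lemma exists_abs_apply_le_of_dK_le (n : ℕ) (q : EuclideanSpace ℝ (Fin (2*n+1))) (D : ℝ) :
    ∃ M : ℝ, 0 ≤ M ∧ ∀ p, dK n p q ≤ D → ∀ i, |p i| ≤ M := by
  set Q : ℝ := ∑ i, |q i|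
  have hq : ∀ i, |q i| ≤ Q := fun i =>
    Finset.single_le_sum (f := fun i => |q i|) (fun _ _ => abs_nonneg _) (Finset.mem_univ i)
  have hQ0 : 0 ≤ Q := Finset.sum_nonneg fun _ _ => abs_nonneg _
  set N : ℝ := Q + |D|
  have hN0 : 0 ≤ N := by positivity
  refine ⟨N + D ^ 2 + 2 * (n * (2 * N ^ 2)), by positivity, fun p hp => ?_⟩
  have hz : ∀ i, i ≠ tI n → |p i| ≤ N := by
    intro i hi
    obtain ⟨j, rfl⟩ := Fin.exists_castSucc_eq.2 hi
    have h1 : (p j.castSucc - q j.castSucc) ^ 2 ≤ D ^ 2 :=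
      (Finset.single_le_sum (f := fun j : Fin (2*n) => (p j.castSucc - q j.castSucc) ^ 2)
        (fun _ _ => sq_nonneg _) (Finset.mem_univ j)).trans (horizontalSq_le_sq_of_dK_le hp)
    have h2 := sq_le_sq.1 h1
    have h3 := abs_sub_abs_le_abs_sub (p j.castSucc) (q j.castSucc)
    linarith [hq j.castSucc]
  intro i
  by_cases hi : i = tI n
  · subst hi
    have hv := abs_le.1 (abs_verticalDisplacement_le_sq_of_dK_le hp)
    have hs := abs_le.1 (abs_symplecticForm_le hz
      (fun i _ => (hq i).trans (le_add_of_nonneg_right (abs_nonneg D))))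
    have ht := abs_le.1 (hq (tI n))
    unfold verticalDisplacement at hv
    rw [abs_le]
    constructor <;> linarith [hv.1, hv.2, hs.1, hs.2, ht.1, ht.2, abs_nonneg D]
  · have := hz i hi
    have : 0 ≤ D ^ 2 + 2 * (n * (2 * N ^ 2)) := by positivity
    linarith

lemma exists_mem_sphere_norm_smul_eq {k : ℕ} (x : EuclideanSpace ℝ (Fin (k+1))) :
    ∃ u ∈ sphere (0 : EuclideanSpace ℝ (Fin (k+1))) 1, ‖x‖ • u = x := by
  by_cases hx : x = 0
  · exact ⟨EuclideanSpace.single 0 1, by simp, by simp [hx]⟩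
  · have : ‖x‖ ≠ 0 := norm_ne_zero_iff.2 hx
    exact ⟨‖x‖⁻¹ • x, by simp [norm_smul, this], by simp [smul_smul, this]⟩

lemma le_two_mul_rpow_sq {d γ : ℝ} (hd0 : 0 ≤ d) (hd2 : d ≤ 2) (hγ0 : 0 < γ) (hγ1 : γ ≤ 1/2) :
    d ≤ 2 * (d ^ γ) ^ 2 := by
  rcases hd0.eq_or_lt with rfl | hd
  · positivity
  rw [← Real.rpow_natCast, ← Real.rpow_mul hd0]
  push_cast
  calc d = d ^ (1 - γ * 2) * d ^ (γ * 2) := by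
        rw [← Real.rpow_add hd]
        simp
    _ ≤ 2 * d ^ (γ * 2) := by
        gcongr
        calc d ^ (1 - γ * 2) ≤ 2 ^ (1 - γ * 2) :=
              Real.rpow_le_rpow hd0 hd2 (by linarith)
          _ ≤ 2 ^ (1 : ℝ) := Real.rpow_le_rpow_of_exponent_le (by norm_num) (by linarith)
          _ = 2 := Real.rpow_one 2

lemma sq_mul_rpow_sq_le {s e d γ : ℝ} (hs0 : 0 ≤ s) (hs1 : s ≤ 1) (he : 0 ≤ e)
    (hse : s * e ≤ 2 * d) (hd : 0 ≤ d) (hγ0 : 0 < γ) (hγ1 : γ ≤ 1/2) :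
    s ^ 2 * (e ^ γ) ^ 2 ≤ 4 * (d ^ γ) ^ 2 := by
  have h1 : s ≤ s ^ γ := by
    simpa using Real.rpow_le_rpow_of_exponent_ge' hs0 hs1 hγ0.le (by linarith : γ ≤ 1)
  have h2 : (2 : ℝ) ^ γ ≤ 2 := by
    simpa using Real.rpow_le_rpow_of_exponent_le (by norm_num : (1 : ℝ) ≤ 2)
      (by linarith : γ ≤ 1)
  have h3 : s * e ^ γ ≤ 2 * d ^ γ :=
    calc s * e ^ γ ≤ s ^ γ * e ^ γ := by gcongr
      _ = (s * e) ^ γ := (Real.mul_rpow hs0 he).symm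
      _ ≤ (2 * d) ^ γ := by gcongr
      _ = 2 ^ γ * d ^ γ := Real.mul_rpow (by norm_num) hd
      _ ≤ 2 * d ^ γ := by gcongr
  have := pow_le_pow_left₀ (by positivity) h3 2
  linarith [mul_pow s (e ^ γ) 2, mul_pow 2 (d ^ γ) 2]

/-- For `k, n ≥ 1` and `0 < γ ≤ 1/2` one has `π_k^γ(ℍ^n) = 0`: every map
`f : S^k → ℝ^{2n+1}` which is `γ`-Hölder into `ℍ^n` admits a `γ`-Hölder (into `ℍ^n`)
extension `F : B̄^{k+1} → ℝ^{2n+1}`. -/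
theorem stmt5 (k n : ℕ) (hk : 1 ≤ k) (hn : 1 ≤ n) (γ : ℝ) (hγ0 : 0 < γ) (hγ1 : γ ≤ 1/2)
    (f : EuclideanSpace ℝ (Fin (k+1)) → EuclideanSpace ℝ (Fin (2*n+1)))
    (hf : ∃ C : ℝ, ∀ x ∈ sphere (0 : EuclideanSpace ℝ (Fin (k+1))) 1,
        ∀ y ∈ sphere (0 : EuclideanSpace ℝ (Fin (k+1))) 1,
        dK n (f x) (f y) ≤ C * dist x y ^ γ) :
    ∃ F : EuclideanSpace ℝ (Fin (k+1)) → EuclideanSpace ℝ (Fin (2*n+1)),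
      (∀ x ∈ sphere (0 : EuclideanSpace ℝ (Fin (k+1))) 1, F x = f x) ∧
      ∃ C' : ℝ, ∀ x ∈ closedBall (0 : EuclideanSpace ℝ (Fin (k+1))) 1,
          ∀ y ∈ closedBall (0 : EuclideanSpace ℝ (Fin (k+1))) 1,
          dK n (F x) (F y) ≤ C' * dist x y ^ γ := by
  obtain ⟨C, hC⟩ := hf
  choose u hu hxu using exists_mem_sphere_norm_smul_eq (k := k)
  set e : EuclideanSpace ℝ (Fin (k+1)) := u 0
  have hdist : ∀ x y : EuclideanSpace ℝ (Fin (k+1)), ‖x‖ ≤ 1 → ‖y‖ ≤ 1 → dist x y ≤ 2 := by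
    intro x y hx hy
    linarith [dist_le_norm_add_norm x y]
  obtain ⟨M, hM0, hM⟩ := exists_abs_apply_le_of_dK_le n (f e) (|C| * 2 ^ γ)
  have hfM : ∀ x ∈ sphere (0 : EuclideanSpace ℝ (Fin (k+1))) 1, ∀ i, |f x i| ≤ M := by
    intro x hx
    refine hM _ ((hC x hx e (hu 0)).trans ?_)
    gcongr
    · exact le_abs_self C
    · exact hdist x e (mem_sphere_zero_iff_norm.1 hx).le (mem_sphere_zero_iff_norm.1 (hu 0)).le
  refine ⟨fun x => heisenbergDilation n ‖x‖ (f (u x)), fun x hx => ?_, ?_⟩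
  · have hx1 : ‖x‖ = 1 := mem_sphere_zero_iff_norm.1 hx
    have hux : u x = x := by simpa [hx1] using hxu x
    simp only [hx1, hux, heisenbergDilation_one]
  set E : ℝ := 1 + 16 * n * M ^ 2 + 8 * C ^ 2 + 2 * (2 * M + 2 * (n * (2 * M ^ 2))) with hE
  have hE1 : 1 ≤ E := by
    have : 0 ≤ 16 * n * M ^ 2 + 8 * C ^ 2 + 2 * (2 * M + 2 * (n * (2 * M ^ 2))) := by positivity
    linarith
  refine ⟨2 * E, fun x hx y hy => ?_⟩
  have hr1 : ‖x‖ ≤ 1 := mem_closedBall_zero_iff.1 hx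
  have hs1 : ‖y‖ ≤ 1 := mem_closedBall_zero_iff.1 hy
  have hr0 := norm_nonneg x
  have hs0 := norm_nonneg y
  have hd2 := hdist x y hr1 hs1
  have hd := le_two_mul_rpow_sq dist_nonneg hd2 hγ0 hγ1
  have hrs : |‖x‖ - ‖y‖| ≤ dist x y := by
    rw [dist_eq_norm]
    exact abs_norm_sub_norm_le x y
  have huv : ‖y‖ * dist (u x) (u y) ≤ 2 * dist x y := by
    have hx' : dist (‖y‖ • u x) x = |‖x‖ - ‖y‖| := by
      nth_rewrite 2 [← hxu x]
      rw [dist_eq_norm, ← sub_smul, norm_smul, mem_sphere_zero_iff_norm.1 (hu x), mul_one,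
        Real.norm_eq_abs, abs_sub_comm]
    calc ‖y‖ * dist (u x) (u y) = dist (‖y‖ • u x) (‖y‖ • u y) := by
          rw [dist_smul₀, norm_norm]
      _ = dist (‖y‖ • u x) y := by rw [hxu y]
      _ ≤ dist (‖y‖ • u x) x + dist x y := dist_triangle _ _ _
      _ ≤ 2 * dist x y := by linarith
  have hse := sq_mul_rpow_sq_le hs0 hs1 dist_nonneg huv dist_nonneg hγ0 hγ1
  have hfuv := hC _ (hu x) _ (hu y)
  have hA := horizontalSq_le_sq_of_dK_le hfuv
  have hB := abs_verticalDisplacement_le_sq_of_dK_le hfuv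
  have hω := abs_symplecticForm_le (fun i _ => hfM _ (hu x) i) (fun i _ => hfM _ (hu y) i)
  have hscale : ‖y‖ ^ 2 * (C * dist (u x) (u y) ^ γ) ^ 2 ≤ 4 * C ^ 2 * (dist x y ^ γ) ^ 2 := by
    nlinarith [mul_le_mul_of_nonneg_left hse (sq_nonneg C)]
  set K : ℝ := dist x y ^ γ
  have hK0 : 0 ≤ K := by positivity
  have hEK : E * K ^ 2 ≤ (E * K) ^ 2 := by
    rw [mul_pow]
    gcongr
    nlinarith
  have hrs' : |‖x‖ - ‖y‖| ≤ 2 * K ^ 2 := hrs.trans hd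
  rw [mul_assoc]
  refine dK_le_two_mul (by positivity) (le_trans ?_ hEK) (le_trans ?_ hEK)
  · refine (horizontalSq_heisenbergDilation_le (f (u y)) (hfM _ (hu x))).trans ?_
    have h1 : (‖x‖ - ‖y‖) ^ 2 ≤ 4 * K ^ 2 := by
      rw [← sq_abs]
      nlinarith [abs_nonneg (‖x‖ - ‖y‖), hrs.trans hd2]
    have h2 := (mul_le_mul_of_nonneg_left hA (sq_nonneg ‖y‖)).trans hscale
    have h3 := mul_le_mul_of_nonneg_left h1 (by positivity : 0 ≤ 4 * n * M ^ 2)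
    have h4 : 0 ≤ (1 + 2 * (2 * M + 2 * (n * (2 * M ^ 2)))) * K ^ 2 := by positivity
    rw [hE]
    linarith
  · rw [verticalDisplacement_heisenbergDilation]
    have h1 : |‖y‖ ^ 2 * verticalDisplacement n (f (u x)) (f (u y))| ≤ 4 * C ^ 2 * K ^ 2 := by
      rw [abs_mul, abs_of_nonneg (sq_nonneg ‖y‖)]
      exact (mul_le_mul_of_nonneg_left hB (sq_nonneg ‖y‖)).trans hscale
    have h2 : |(‖x‖ + ‖y‖) * f (u x) (tI n) +
        2 * ‖y‖ * symplecticForm n (f (u x)) (f (u y))| ≤ 2 * M + 2 * (n * (2 * M ^ 2)) := by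
      refine (abs_add_le _ _).trans ?_
      rw [abs_mul, abs_mul, abs_of_nonneg (add_nonneg hr0 hs0),
        abs_of_nonneg (by positivity : 0 ≤ 2 * ‖y‖)]
      gcongr
      · linarith
      · exact hfM _ (hu x) _
      · linarith
    have h3 := mul_le_mul hrs' h2 (abs_nonneg _) (by positivity)
    have h4 : 0 ≤ (1 + 16 * n * M ^ 2 + 4 * C ^ 2) * K ^ 2 := by positivity
    refine (abs_add_le _ _).trans ?_
    rw [abs_mul (‖x‖ - ‖y‖), hE]
    linarith
end

section
/- Let Ω ⊆ ℝ^m be open, let f : Ω → ℝ^{2n+1} be continuous, and let 1/2 < γ ≤ 1. Then f is locally γ-Hölder continuous as a map into ℍ^n (with respect to the Korányi metric) if and only if both of the following hold: (a) the map π∘f : Ω → ℝ^{2n} given by the first 2n components of f is locally γ-Hölder continuous with respect to the Euclidean metrics; and (b) for every compact set K ⊆ Ω, sup_{p ∈ K} |(f_ε^*α)(p)| → 0 as ε → 0+, where f_ε = f * η_ε is the standard ε-mollification of f (defined on K for all ε smaller than the distance from K to the complement of Ω). -/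
open Metric Set MeasureTheory Topology

/-- The Euclidean distance between the projections of `p, q ∈ ℝ^{2n+1}` onto the first
`2n` coordinates. -/
noncomputable def edistProj (n : ℕ) (p q : EuclideanSpace ℝ (Fin (2*n+1))) : ℝ :=
  Real.sqrt (∑ i : Fin (2*n), (p (Fin.castSucc i) - q (Fin.castSucc i)) ^ 2)

/-- The `ε`-mollification `f_ε = f * η_ε` of `f`, where `η_ε(z) = ε^{-m} η(z/ε)`. -/
noncomputable def mollify (m d : ℕ) (η : EuclideanSpace ℝ (Fin m) → ℝ) (ε : ℝ)
    (f : EuclideanSpace ℝ (Fin m) → EuclideanSpace ℝ (Fin d))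
    (p : EuclideanSpace ℝ (Fin m)) : EuclideanSpace ℝ (Fin d) :=
  ∫ z, ((ε ^ m)⁻¹ * η (ε⁻¹ • z)) • f (p - z)

/-- The pullback `g^*α` of the standard contact form
`α = dt + 2 ∑_j (x_j dy_j - y_j dx_j)`, identified with the `ℝ^m`-valued map
`g^*α(p) = ∇g^t(p) + 2 ∑_j (g^{x_j}(p)·∇g^{y_j}(p) - g^{y_j}(p)·∇g^{x_j}(p))`. -/
noncomputable def pullA (n m : ℕ)
    (g : EuclideanSpace ℝ (Fin m) → EuclideanSpace ℝ (Fin (2*n+1)))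
    (p : EuclideanSpace ℝ (Fin m)) : EuclideanSpace ℝ (Fin m) :=
  gradient (fun q => g q (tI n)) p +
    (2:ℝ) • ∑ j : Fin n,
      (g p (xI n j) • gradient (fun q => g q (yI n j)) p -
        g p (yI n j) • gradient (fun q => g q (xI n j)) p)

lemma sub_mem_closedBall_of_mem {E : Type*} [NormedAddCommGroup E] {p z : E} {ε : ℝ}
    (hz : z ∈ closedBall (0 : E) ε) : p - z ∈ closedBall p ε := by
  simpa [dist_eq_norm] using hz

section KernelAverage

variable {E F : Type*} [NormedAddCommGroup E] [InnerProductSpace ℝ E] [FiniteDimensional ℝ E]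
  [MeasurableSpace E] [BorelSpace E] [NormedAddCommGroup F] [NormedSpace ℝ F]

/-- A nonnegative `C^1` kernel of total mass one, supported in the closed ball of radius `ε`. -/
structure IsAveragingKernel (ψ : E → ℝ) (ε : ℝ) : Prop where
  contDiff : ContDiff ℝ 1 ψ
  support_subset : Function.support ψ ⊆ closedBall 0 ε
  nonneg : ∀ z, 0 ≤ ψ z
  integral_eq_one : ∫ z, ψ z = 1

/-- The average `q ↦ ∫ ψ(z) f(q - z) dz` of `f` against the kernel `ψ`. -/
noncomputable def kernelAverage (ψ : E → ℝ) (f : E → F) (q : E) : F :=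
  ∫ z, ψ z • f (q - z)

lemma integrable_kernel_smul {ψ : E → ℝ} {f : E → F} {p : E} {ε : ℝ}
    (hψ : IsAveragingKernel ψ ε) (hf : ContinuousOn f (closedBall p ε)) :
    Integrable (fun z => ψ z • f (p - z)) := by
  have hs : Function.support (fun z => ψ z • f (p - z)) ⊆ closedBall 0 ε := fun z hz =>
    hψ.support_subset fun h => hz (by simp [h])
  rw [← integrableOn_iff_integrable_of_support_subset hs]
  refine ContinuousOn.integrableOn_compact (isCompact_closedBall _ _) ?_
  refine hψ.contDiff.continuous.continuousOn.smul (hf.comp (by fun_prop) ?_)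
  exact fun z hz => sub_mem_closedBall_of_mem hz

lemma integrable_kernel {ψ : E → ℝ} {ε : ℝ} (hψ : IsAveragingKernel ψ ε) : Integrable ψ :=
  hψ.contDiff.continuous.integrable_of_hasCompactSupport
    (HasCompactSupport.of_support_subset_isCompact (isCompact_closedBall _ _) hψ.support_subset)

lemma map_kernelAverage [CompleteSpace F] {ψ : E → ℝ} {f : E → F} {p : E} {ε : ℝ}
    (hψ : IsAveragingKernel ψ ε)
    (hf : ContinuousOn f (closedBall p ε)) (ℓ : F →L[ℝ] ℝ) :
    ℓ (kernelAverage ψ f p) = kernelAverage ψ (fun q => ℓ (f q)) p := by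
  unfold kernelAverage
  rw [← ℓ.integral_comp_comm (integrable_kernel_smul hψ hf)]
  simp

lemma norm_integral_kernel_smul_le {ψ : E → ℝ} {h : E → F} {ε M : ℝ} (hψ : IsAveragingKernel ψ ε)
    (hM : ∀ z ∈ closedBall (0 : E) ε, ‖h z‖ ≤ M) : ‖∫ z, ψ z • h z‖ ≤ M := by
  calc ‖∫ z, ψ z • h z‖ ≤ ∫ z, ψ z * M := by
        refine norm_integral_le_of_norm_le ((integrable_kernel hψ).mul_const M)
          (Filter.Eventually.of_forall fun z => ?_)
        rw [norm_smul, Real.norm_of_nonneg (hψ.nonneg z)]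
        by_cases hz : ψ z = 0
        · simp [hz]
        · exact mul_le_mul_of_nonneg_left (hM z (hψ.support_subset hz)) (hψ.nonneg z)
    _ = M := by rw [integral_mul_const, hψ.integral_eq_one, one_mul]

lemma norm_kernelAverage_sub_le [CompleteSpace F] {ψ : E → ℝ} {f : E → F} {p : E} {c : F}
    {ε M : ℝ} (hψ : IsAveragingKernel ψ ε)
    (hf : ContinuousOn f (closedBall p ε))
    (hM : ∀ q ∈ closedBall p ε, ‖f q - c‖ ≤ M) : ‖kernelAverage ψ f p - c‖ ≤ M := by
  have : kernelAverage ψ f p - c = ∫ z, ψ z • (f (p - z) - c) := by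
    simp_rw [smul_sub]
    rw [integral_sub (integrable_kernel_smul hψ hf)
      ((integrable_kernel hψ).smul_const c), integral_smul_const, hψ.integral_eq_one, one_smul,
      kernelAverage]
  rw [this]
  exact norm_integral_kernel_smul_le hψ
    fun z hz => hM _ (sub_mem_closedBall_of_mem hz)

lemma norm_kernelAverage_sub_kernelAverage_le {ψ : E → ℝ} {f : E → F} {p q : E}
    {ε M : ℝ} (hψ : IsAveragingKernel ψ ε)
    (hfp : ContinuousOn f (closedBall p ε)) (hfq : ContinuousOn f (closedBall q ε))
    (hM : ∀ z ∈ closedBall (0 : E) ε, ‖f (p - z) - f (q - z)‖ ≤ M) :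
    ‖kernelAverage ψ f p - kernelAverage ψ f q‖ ≤ M := by
  have : kernelAverage ψ f p - kernelAverage ψ f q = ∫ z, ψ z • (f (p - z) - f (q - z)) := by
    simp_rw [smul_sub]
    rw [integral_sub (integrable_kernel_smul hψ hfp)
      (integrable_kernel_smul hψ hfq), kernelAverage, kernelAverage]
  rw [this]
  exact norm_integral_kernel_smul_le hψ hM

open scoped Convolution in
lemma exists_hasFDerivAt_kernelAverage [CompleteSpace F] {ψ : E → ℝ} {f : E → F} {p : E}
    {ε R : ℝ} (hεR : ε < R) (hψ : IsAveragingKernel ψ ε) (hf : ContinuousOn f (closedBall p R))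
    (c : F) {M : ℝ} (hM : ∀ q ∈ closedBall p ε, ‖f q - c‖ ≤ M) :
    ∃ L : E →L[ℝ] F, HasFDerivAt (kernelAverage ψ f) L p ∧ ‖L‖ ≤ M * ∫ z, ‖fderiv ℝ ψ z‖ := by
  set h : E → F := (closedBall p R).indicator fun q => f q - c with hh
  have hcs : HasCompactSupport ψ :=
    HasCompactSupport.of_support_subset_isCompact (isCompact_closedBall _ _) hψ.support_subset
  have hh_int : Integrable h := by
    rw [hh, integrable_indicator_iff isClosed_closedBall.measurableSet]
    exact (hf.sub continuousOn_const).integrableOn_compact (isCompact_closedBall _ _)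
  have hder := hcs.hasFDerivAt_convolution_left (ContinuousLinearMap.lsmul ℝ ℝ) hψ.contDiff
    hh_int.locallyIntegrable p
  have heq : kernelAverage ψ f =ᶠ[𝓝 p]
      fun q => (ψ ⋆[ContinuousLinearMap.lsmul ℝ ℝ, volume] h) q + (∫ z, ψ z) • c := by
    filter_upwards [ball_mem_nhds p (sub_pos.2 hεR)] with q hq
    have hsub : closedBall q ε ⊆ closedBall p R := by
      refine closedBall_subset_closedBall' ?_
      have := mem_ball.1 hq
      linarith
    have h1 : (ψ ⋆[ContinuousLinearMap.lsmul ℝ ℝ, volume] h) q =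
        ∫ z, ψ z • (f (q - z) - c) := by
      unfold convolution
      refine integral_congr_ae (Filter.Eventually.of_forall fun z => ?_)
      by_cases hz : ψ z = 0
      · simp [hz]
      · have : q - z ∈ closedBall p R := hsub (sub_mem_closedBall_of_mem (hψ.support_subset hz))
        simp [hh, this]
    rw [h1]
    simp_rw [smul_sub]
    rw [integral_sub (integrable_kernel_smul hψ (hf.mono hsub))
      ((integrable_kernel hψ).smul_const c), integral_smul_const,
      sub_add_cancel, kernelAverage]
  refine ⟨_, (hder.add_const _).congr_of_eventuallyEq heq, ?_⟩
  have hfd : Continuous (fderiv ℝ ψ) := hψ.contDiff.continuous_fderiv one_ne_zero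
  have hts : tsupport ψ ⊆ closedBall 0 ε := closure_minimal hψ.support_subset isClosed_closedBall
  have hint : Integrable fun z => ‖fderiv ℝ ψ z‖ :=
    (hfd.integrable_of_hasCompactSupport (hcs.fderiv ℝ)).norm
  rw [mul_comm, ← integral_mul_const]
  refine norm_integral_le_of_norm_le (hint.mul_const M) (Filter.Eventually.of_forall fun z => ?_)
  by_cases hz : fderiv ℝ ψ z = 0
  · simp [hz]
  · have hz' : z ∈ closedBall (0 : E) ε := hts (support_fderiv_subset ℝ hz)
    have hpz := sub_mem_closedBall_of_mem (p := p) hz'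
    have hbound : ‖h (p - z)‖ ≤ M := by
      simpa [hh, closedBall_subset_closedBall hεR.le hpz] using hM _ hpz
    refine ContinuousLinearMap.opNorm_le_bound _ ?_ fun v => ?_
    · exact mul_nonneg (norm_nonneg _) ((norm_nonneg _).trans hbound)
    · rw [ContinuousLinearMap.precompL_apply, ContinuousLinearMap.lsmul_apply, norm_smul]
      calc ‖fderiv ℝ ψ z v‖ * ‖h (p - z)‖ ≤ (‖fderiv ℝ ψ z‖ * ‖v‖) * M :=
            mul_le_mul ((fderiv ℝ ψ z).le_opNorm v) hbound (norm_nonneg _) (by positivity)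
        _ = ‖fderiv ℝ ψ z‖ * M * ‖v‖ := by ring

lemma differentiableAt_kernelAverage [CompleteSpace F] {ψ : E → ℝ} {f : E → F} {p : E}
    {ε R : ℝ} (hεR : ε < R) (hψ : IsAveragingKernel ψ ε) (hf : ContinuousOn f (closedBall p R)) :
    DifferentiableAt ℝ (kernelAverage ψ f) p := by
  obtain ⟨M, hM⟩ := ((isCompact_closedBall p R).image_of_continuousOn hf).isBounded.exists_norm_le
  obtain ⟨L, hL, -⟩ := exists_hasFDerivAt_kernelAverage hεR hψ hf 0 (M := M) fun q hq => by
    simpa using hM _ (mem_image_of_mem f (closedBall_subset_closedBall hεR.le hq))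
  exact hL.differentiableAt

lemma norm_comp_fderiv_kernelAverage_le [CompleteSpace F] {ψ : E → ℝ} {f : E → F} {p : E}
    {ε R : ℝ} (hεR : ε < R) (hψ : IsAveragingKernel ψ ε) (hf : ContinuousOn f (closedBall p R))
    (ℓ : F →L[ℝ] ℝ) {M : ℝ} (hM : ∀ q ∈ closedBall p ε, |ℓ (f q - f p)| ≤ M) :
    ‖ℓ.comp (fderiv ℝ (kernelAverage ψ f) p)‖ ≤ M * ∫ z, ‖fderiv ℝ ψ z‖ := by
  obtain ⟨L, hL, hLM⟩ := exists_hasFDerivAt_kernelAverage hεR hψ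
    (f := fun q => ℓ (f q)) (ℓ.continuous.comp_continuousOn hf) (ℓ (f p)) (M := M) fun q hq => by
      simpa using hM q hq
  have heq : (fun q => ℓ (kernelAverage ψ f q)) =ᶠ[𝓝 p] kernelAverage ψ fun q => ℓ (f q) := by
    filter_upwards [ball_mem_nhds p (sub_pos.2 hεR)] with q hq
    refine map_kernelAverage hψ (hf.mono (closedBall_subset_closedBall' ?_)) ℓ
    have := mem_ball.1 hq
    linarith
  have h1 := ℓ.hasFDerivAt.comp p (differentiableAt_kernelAverage hεR hψ hf).hasFDerivAt
  have h2 : HasFDerivAt (fun q => ℓ (kernelAverage ψ f q)) L p := hL.congr_of_eventuallyEq heq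
  rwa [h1.unique h2]

lemma IsAveragingKernel.rescale {m : ℕ} {η : EuclideanSpace ℝ (Fin m) → ℝ}
    (hη : IsAveragingKernel η 1) {ε : ℝ} (hε : 0 < ε) :
    IsAveragingKernel (fun z => (ε ^ m)⁻¹ * η (ε⁻¹ • z)) ε where
  contDiff := contDiff_const.mul (hη.contDiff.comp (contDiff_const_smul _))
  support_subset := fun z hz => by
    have h1 : ε⁻¹ • z ∈ closedBall (0 : EuclideanSpace ℝ (Fin m)) 1 :=
      hη.support_subset fun h => hz (by simp [h])
    rw [mem_closedBall_zero_iff, norm_smul, norm_inv, Real.norm_of_nonneg hε.le,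
      inv_mul_le_one₀ hε] at h1
    simpa using h1
  nonneg := fun z => mul_nonneg (by positivity) (hη.nonneg _)
  integral_eq_one := by
    rw [integral_const_mul, Measure.integral_comp_inv_smul, hη.integral_eq_one]
    simp [abs_of_pos hε, hε.ne']

lemma integral_norm_fderiv_rescale {m : ℕ} {η : EuclideanSpace ℝ (Fin m) → ℝ}
    (hη : IsAveragingKernel η 1) {ε : ℝ} (hε : 0 < ε) :
    ∫ z, ‖fderiv ℝ (fun z => (ε ^ m)⁻¹ * η (ε⁻¹ • z)) z‖ = ε⁻¹ * ∫ z, ‖fderiv ℝ η z‖ := by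
  have h : ∀ z, ‖fderiv ℝ (fun z => (ε ^ m)⁻¹ * η (ε⁻¹ • z)) z‖ =
      (ε ^ m)⁻¹ * ε⁻¹ * ‖fderiv ℝ η (ε⁻¹ • z)‖ := fun z => by
    have hd := hη.contDiff.differentiable one_ne_zero
    rw [fderiv_const_mul (by fun_prop), fderiv_comp_smul, norm_smul, norm_smul,
      Real.norm_of_nonneg (by positivity), Real.norm_of_nonneg (by positivity), mul_assoc]
  simp_rw [h]
  rw [integral_const_mul, Measure.integral_comp_inv_smul volume (fun z => ‖fderiv ℝ η z‖)]
  simp only [finrank_euclideanSpace, Fintype.card_fin, abs_pow, abs_of_pos hε, smul_eq_mul]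
  field_simp

end KernelAverage

section Sewing

/-- Dyadic sewing: a two-point function that is additive at midpoints up to an error of order
`2γ > 1`, and linearly bounded with slope `δ` at small scales, is bounded by `δ d + K d ^ (2γ)`. -/
lemma sewing_bound {E : Type*} [NormedAddCommGroup E] [NormedSpace ℝ E] {s : Set E}
    (hs : Convex ℝ s) {γ C A δ : ℝ} (hγ : 1 / 2 < γ) (hC : 0 ≤ C) (φ : E → E → ℝ)
    (hmid : ∀ x ∈ s, ∀ y ∈ s, |φ x y| ≤
      |φ x (midpoint ℝ x y)| + |φ (midpoint ℝ x y) y| + C * dist x y ^ (2 * γ))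
    (hsmall : ∀ x ∈ s, ∀ y ∈ s, |φ x y| ≤ dist x y * (δ + A * dist x y ^ γ))
    {x y : E} (hx : x ∈ s) (hy : y ∈ s) :
    |φ x y| ≤ δ * dist x y + C / (1 - 2 ^ (1 - 2 * γ)) * dist x y ^ (2 * γ) := by
  have hlt : (2 : ℝ) ^ (1 - 2 * γ) < 1 :=
    Real.rpow_lt_one_of_one_lt_of_neg (by norm_num) (by linarith)
  set θ : ℝ := 2 ^ (1 - 2 * γ) with hθ
  set K : ℝ := C / (1 - θ) with hK
  have hCK : K * θ + C = K := by
    have : 1 - θ ≠ 0 := by linarith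
    rw [hK]; field_simp; ring
  have hθ' : 2 * ((1 / 2 : ℝ) ^ (2 * γ)) = θ := by
    rw [hθ, Real.rpow_sub (by norm_num), Real.rpow_one, one_div, Real.inv_rpow (by norm_num)]
    rfl
  set τ : ℝ := (1 / 2) ^ γ with hτ
  have hτ0 : 0 ≤ τ := by positivity
  have hτ1 : τ < 1 := Real.rpow_lt_one (by norm_num) (by norm_num) (by linarith)
  have hiter : ∀ N : ℕ, ∀ x ∈ s, ∀ y ∈ s, |φ x y| ≤
      dist x y * (δ + A * τ ^ N * dist x y ^ γ) + K * dist x y ^ (2 * γ) := by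
    intro N
    induction N with
    | zero =>
      intro x hx y hy
      have : 0 ≤ K * dist x y ^ (2 * γ) :=
        mul_nonneg (div_nonneg hC (by linarith)) (Real.rpow_nonneg dist_nonneg _)
      have := hsmall x hx y hy
      simp only [pow_zero, mul_one]
      linarith
    | succ N ih =>
      intro x hx y hy
      have hw : midpoint ℝ x y ∈ s := hs.midpoint_mem hx hy
      have hxw : dist x (midpoint ℝ x y) = 1 / 2 * dist x y := by
        rw [dist_left_midpoint]; norm_num
      have hwy : dist (midpoint ℝ x y) y = 1 / 2 * dist x y := by
        rw [dist_midpoint_right]; norm_num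
      have h1 := ih x hx _ hw
      have h2 := ih _ hw y hy
      rw [hxw, Real.mul_rpow (by norm_num) dist_nonneg,
        Real.mul_rpow (by norm_num) dist_nonneg] at h1
      rw [hwy, Real.mul_rpow (by norm_num) dist_nonneg,
        Real.mul_rpow (by norm_num) dist_nonneg] at h2
      calc |φ x y| ≤ _ := hmid x hx y hy
        _ ≤ _ := add_le_add_left (add_le_add h1 h2) _
        _ = dist x y * (δ + A * (τ ^ N * τ) * dist x y ^ γ) +
            (K * (2 * (1 / 2) ^ (2 * γ)) + C) * dist x y ^ (2 * γ) := by rw [hτ]; ring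
        _ = _ := by rw [hθ', hCK, pow_succ]
  have hlim : Filter.Tendsto
      (fun N : ℕ => dist x y * (δ + A * τ ^ N * dist x y ^ γ) + K * dist x y ^ (2 * γ))
      Filter.atTop (𝓝 (dist x y * (δ + A * 0 * dist x y ^ γ) + K * dist x y ^ (2 * γ))) :=
    (((((tendsto_pow_atTop_nhds_zero_of_lt_one hτ0 hτ1).const_mul A).mul_const _).const_add
      _).const_mul _).add_const _
  have := ge_of_tendsto' hlim fun N => hiter N x hx y hy
  linarith

end Sewing

lemma rpow_two_mul_eq_sq {d : ℝ} (hd : 0 ≤ d) (γ : ℝ) : d ^ (2 * γ) = (d ^ γ) ^ 2 := by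
  rw [mul_comm, Real.rpow_mul hd, Real.rpow_two]

section ContactForm

/-- The standard contact form `dt + 2 ∑_j (x_j dy_j - y_j dx_j)` at the point `a`. -/
noncomputable def contactForm (n : ℕ) (a : EuclideanSpace ℝ (Fin (2 * n + 1))) :
    EuclideanSpace ℝ (Fin (2 * n + 1)) →L[ℝ] ℝ :=
  EuclideanSpace.proj (tI n) + (2 : ℝ) • ∑ j : Fin n,
    (a (xI n j) • EuclideanSpace.proj (yI n j) - a (yI n j) • EuclideanSpace.proj (xI n j))

variable {n m : ℕ}

lemma contactForm_apply (a b : EuclideanSpace ℝ (Fin (2 * n + 1))) :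
    contactForm n a b = b (tI n) + 2 * ∑ j : Fin n,
      (a (xI n j) * b (yI n j) - a (yI n j) * b (xI n j)) := by
  simp [contactForm]

lemma abs_contactForm_sub_le {a b c : EuclideanSpace ℝ (Fin (2 * n + 1))} {M M' : ℝ}
    (hab : ∀ i : Fin (2 * n), |a i.castSucc - b i.castSucc| ≤ M)
    (hc : ∀ i : Fin (2 * n), |c i.castSucc| ≤ M') :
    |contactForm n a c - contactForm n b c| ≤ 4 * n * (M * M') := by
  have key : contactForm n a c - contactForm n b c = 2 * ∑ j : Fin n,
      ((a (xI n j) - b (xI n j)) * c (yI n j) - (a (yI n j) - b (yI n j)) * c (xI n j)) := by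
    rw [contactForm_apply, contactForm_apply, add_sub_add_left_eq_sub, ← mul_sub,
      ← Finset.sum_sub_distrib]
    congr 1
    exact Finset.sum_congr rfl fun j _ => by ring
  have hprod : ∀ i k : Fin (2 * n),
      |(a i.castSucc - b i.castSucc) * c k.castSucc| ≤ M * M' := fun i k => by
    rw [abs_mul]
    exact mul_le_mul (hab i) (hc k) (abs_nonneg _) ((abs_nonneg _).trans (hab i))
  have hterm : ∀ j : Fin n, |(a (xI n j) - b (xI n j)) * c (yI n j) -
      (a (yI n j) - b (yI n j)) * c (xI n j)| ≤ 2 * (M * M') := fun j => by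
    have hx : xI n j = Fin.castSucc ⟨2 * j.1, by omega⟩ := rfl
    have hy : yI n j = Fin.castSucc ⟨2 * j.1 + 1, by omega⟩ := rfl
    rw [hx, hy, two_mul (M * M')]
    exact (abs_sub _ _).trans (add_le_add (hprod _ _) (hprod _ _))
  calc |contactForm n a c - contactForm n b c|
      ≤ 2 * ∑ _j : Fin n, 2 * (M * M') := by
        rw [key, abs_mul, abs_two]
        gcongr
        exact (Finset.abs_sum_le_sum_abs _ _).trans (Finset.sum_le_sum fun j _ => hterm j)
    _ = 4 * n * (M * M') := by simp; ring

lemma norm_contactForm_sub_comp_le {E : Type*} [NormedAddCommGroup E] [NormedSpace ℝ E]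
    {a b : EuclideanSpace ℝ (Fin (2 * n + 1))} {D : E →L[ℝ] EuclideanSpace ℝ (Fin (2 * n + 1))}
    {M M' : ℝ} (hM : 0 ≤ M) (hM' : 0 ≤ M')
    (hab : ∀ i : Fin (2 * n), |a i.castSucc - b i.castSucc| ≤ M)
    (hD : ∀ i : Fin (2 * n), ‖(EuclideanSpace.proj i.castSucc :
      EuclideanSpace ℝ (Fin (2 * n + 1)) →L[ℝ] ℝ).comp D‖ ≤ M') :
    ‖(contactForm n a).comp D - (contactForm n b).comp D‖ ≤ 4 * n * (M * M') := by
  refine ContinuousLinearMap.opNorm_le_bound _ (by positivity) fun v => ?_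
  have := abs_contactForm_sub_le (c := D v) hab (M' := M' * ‖v‖) fun i =>
    ContinuousLinearMap.le_of_opNorm_le _ (hD i) v
  simpa [mul_assoc] using this

lemma abs_apply_castSucc_sub_le_edistProj (p q : EuclideanSpace ℝ (Fin (2 * n + 1)))
    (i : Fin (2 * n)) : |p i.castSucc - q i.castSucc| ≤ edistProj n p q := by
  refine Real.abs_le_sqrt ?_
  exact Finset.single_le_sum (f := fun i : Fin (2 * n) => (p i.castSucc - q i.castSucc) ^ 2)
    (fun _ _ => sq_nonneg _) (Finset.mem_univ i)

lemma dK_eq (p q : EuclideanSpace ℝ (Fin (2 * n + 1))) :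
    dK n p q = (edistProj n p q ^ 4 + contactForm n q (p - q) ^ 2) ^ ((1 : ℝ) / 4) := by
  have h1 : edistProj n p q ^ 4 =
      (∑ i : Fin (2 * n), (p i.castSucc - q i.castSucc) ^ 2) ^ 2 := by
    rw [edistProj, show 4 = 2 * 2 from rfl, pow_mul,
      Real.sq_sqrt (Finset.sum_nonneg fun _ _ => sq_nonneg _)]
  rw [h1, dK, contactForm_apply]
  congr 5
  refine Finset.sum_congr rfl fun j _ => ?_
  simp only [PiLp.sub_apply]
  ring

lemma dK_le_iff {p q : EuclideanSpace ℝ (Fin (2 * n + 1))} {D : ℝ} (hD : 0 ≤ D) :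
    dK n p q ≤ D ↔ edistProj n p q ^ 4 + contactForm n q (p - q) ^ 2 ≤ D ^ 4 := by
  rw [dK_eq, one_div, Real.rpow_inv_le_iff_of_pos (by positivity) hD (by norm_num)]
  norm_cast

lemma edistProj_le_of_dK_le {p q : EuclideanSpace ℝ (Fin (2 * n + 1))} {D : ℝ} (hD : 0 ≤ D)
    (h : dK n p q ≤ D) : edistProj n p q ≤ D := by
  rw [dK_le_iff hD] at h
  exact le_of_pow_le_pow_left₀ (n := 4) (by norm_num) hD
    (by linarith [sq_nonneg (contactForm n q (p - q))])

lemma abs_contactForm_le_of_dK_le {p q : EuclideanSpace ℝ (Fin (2 * n + 1))} {D : ℝ}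
    (hD : 0 ≤ D) (h : dK n p q ≤ D) : |contactForm n q (p - q)| ≤ D ^ 2 := by
  rw [dK_le_iff hD] at h
  refine abs_le_of_sq_le_sq ?_ (by positivity)
  have : 0 ≤ edistProj n p q ^ 4 := by positivity
  linarith [show (D ^ 2) ^ 2 = D ^ 4 by ring]

lemma dK_le_of_le {p q : EuclideanSpace ℝ (Fin (2 * n + 1))} {C K D : ℝ} (hC : 0 ≤ C)
    (hK : 0 ≤ K) (hD : 0 ≤ D) (h1 : edistProj n p q ≤ C * D)
    (h2 : |contactForm n q (p - q)| ≤ K * D ^ 2) : dK n p q ≤ (C + K + 1) * D := by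
  rw [dK_le_iff (by positivity)]
  have h3 : edistProj n p q ^ 4 ≤ (C * D) ^ 4 := pow_le_pow_left₀ (Real.sqrt_nonneg _) h1 4
  have h4 : contactForm n q (p - q) ^ 2 ≤ (K * D ^ 2) ^ 2 := by
    rw [← sq_abs]
    exact pow_le_pow_left₀ (abs_nonneg _) h2 2
  have h5 : C ^ 4 + K ^ 2 ≤ (C + K + 1) ^ 4 := by
    calc C ^ 4 + K ^ 2 ≤ (C ^ 2 + K) ^ 2 := by nlinarith [mul_nonneg (sq_nonneg C) hK]
      _ ≤ ((C + K + 1) ^ 2) ^ 2 :=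
        pow_le_pow_left₀ (by positivity) (by nlinarith [mul_nonneg hC hK]) 2
      _ = _ := by ring
  calc _ ≤ (C * D) ^ 4 + (K * D ^ 2) ^ 2 := add_le_add h3 h4
    _ = (C ^ 4 + K ^ 2) * D ^ 4 := by ring
    _ ≤ (C + K + 1) ^ 4 * D ^ 4 := by gcongr
    _ = _ := by ring

lemma norm_pullA {g : EuclideanSpace ℝ (Fin m) → EuclideanSpace ℝ (Fin (2 * n + 1))}
    {p : EuclideanSpace ℝ (Fin m)} (hg : DifferentiableAt ℝ g p) :
    ‖pullA n m g p‖ = ‖(contactForm n (g p)).comp (fderiv ℝ g p)‖ := by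
  have hcoord : ∀ i, fderiv ℝ (fun q => g q i) p =
      (EuclideanSpace.proj i :
        EuclideanSpace ℝ (Fin (2 * n + 1)) →L[ℝ] ℝ).comp (fderiv ℝ g p) := fun i =>
    ((EuclideanSpace.proj i :
      EuclideanSpace ℝ (Fin (2 * n + 1)) →L[ℝ] ℝ).hasFDerivAt.comp p
      hg.hasFDerivAt).fderiv
  have : pullA n m g p = (InnerProductSpace.toDual ℝ (EuclideanSpace ℝ (Fin m))).symm
      ((contactForm n (g p)).comp (fderiv ℝ g p)) := by
    have hexp : (contactForm n (g p)).comp (fderiv ℝ g p) =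
        fderiv ℝ (fun q => g q (tI n)) p + (2 : ℝ) • ∑ j : Fin n,
          (g p (xI n j) • fderiv ℝ (fun q => g q (yI n j)) p -
            g p (yI n j) • fderiv ℝ (fun q => g q (xI n j)) p) := by
      simp only [hcoord]
      ext v
      simp [contactForm_apply]
    rw [hexp]
    simp [pullA, gradient, map_sum]
  rw [this, LinearIsometryEquiv.norm_map]

lemma abs_contactForm_sub_le_add {a b c : EuclideanSpace ℝ (Fin (2 * n + 1))} {M M' : ℝ}
    (hab : ∀ i : Fin (2 * n), |a i.castSucc - b i.castSucc| ≤ M)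
    (hcb : ∀ i : Fin (2 * n), |c i.castSucc - b i.castSucc| ≤ M') :
    |contactForm n a (c - a)| ≤ |contactForm n b (c - b)| + |contactForm n a (b - a)| +
      4 * n * (M * M') := by
  have h := abs_contactForm_sub_le (c := c - b) hab (M' := M') fun i => by simpa using hcb i
  have : contactForm n a (c - a) = contactForm n b (c - b) + contactForm n a (b - a) +
      (contactForm n a (c - b) - contactForm n b (c - b)) := by
    rw [← sub_add_sub_cancel c b a, map_add]; ring
  rw [this]
  exact (abs_add_three _ _ _).trans (by gcongr)

end ContactForm

section Mollification

variable {n m : ℕ} {γ C R ε : ℝ} {p₀ : EuclideanSpace ℝ (Fin m)}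
  {f : EuclideanSpace ℝ (Fin m) → EuclideanSpace ℝ (Fin (2 * n + 1))}
  {ψ : EuclideanSpace ℝ (Fin m) → ℝ}

lemma closedBall_subset_of_mem_half {E : Type*} [PseudoMetricSpace E] {p₀ p : E} {R r : ℝ}
    (hr : r ≤ R / 2) (hp : p ∈ closedBall p₀ (R / 2)) : closedBall p r ⊆ closedBall p₀ R := by
  refine closedBall_subset_closedBall' ?_
  have := mem_closedBall.1 hp
  linarith

/-- The horizontal coordinates of `f` satisfy a `γ`-Hölder estimate with constant `C` on `s`. -/
def HorizontalHolderOn (f : EuclideanSpace ℝ (Fin m) → EuclideanSpace ℝ (Fin (2 * n + 1)))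
    (C γ : ℝ) (s : Set (EuclideanSpace ℝ (Fin m))) : Prop :=
  ∀ x ∈ s, ∀ y ∈ s, ∀ i : Fin (2 * n), |f x i.castSucc - f y i.castSucc| ≤ C * dist x y ^ γ

lemma HorizontalHolderOn.abs_sub_le_of_dist_le {s : Set (EuclideanSpace ℝ (Fin m))}
    (h : HorizontalHolderOn f C γ s) (hC : 0 ≤ C) (hγ : 0 ≤ γ) {x y : EuclideanSpace ℝ (Fin m)}
    (hx : x ∈ s) (hy : y ∈ s) {d : ℝ} (hd : dist x y ≤ d) (i : Fin (2 * n)) :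
    |f x i.castSucc - f y i.castSucc| ≤ C * d ^ γ :=
  (h x hx y hy i).trans (by gcongr)

lemma norm_proj_comp_fderiv_kernelAverage_le (hψ : IsAveragingKernel ψ ε) (hε : 0 < ε)
    (hεR : ε < R / 2) (hf : ContinuousOn f (closedBall p₀ R)) (hC : 0 ≤ C) (hγ : 0 ≤ γ)
    (h : HorizontalHolderOn f C γ (closedBall p₀ R)) {p : EuclideanSpace ℝ (Fin m)}
    (hp : p ∈ closedBall p₀ (R / 2)) (i : Fin (2 * n)) :
    ‖(EuclideanSpace.proj i.castSucc : EuclideanSpace ℝ (Fin (2 * n + 1)) →L[ℝ] ℝ).comp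
      (fderiv ℝ (kernelAverage ψ f) p)‖ ≤ C * ε ^ γ * ∫ z, ‖fderiv ℝ ψ z‖ := by
  refine norm_comp_fderiv_kernelAverage_le hεR hψ
    (hf.mono (closedBall_subset_of_mem_half le_rfl hp)) _ fun q hq => ?_
  simpa using h.abs_sub_le_of_dist_le hC hγ (closedBall_subset_of_mem_half hεR.le hp hq)
    (closedBall_subset_of_mem_half hεR.le hp (mem_closedBall_self hε.le)) hq i

lemma abs_kernelAverage_sub_apply_le (hψ : IsAveragingKernel ψ ε) (hε : 0 < ε)
    (hεR : ε < R / 2) (hf : ContinuousOn f (closedBall p₀ R)) (hC : 0 ≤ C) (hγ : 0 ≤ γ)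
    (h : HorizontalHolderOn f C γ (closedBall p₀ R)) {p : EuclideanSpace ℝ (Fin m)}
    (hp : p ∈ closedBall p₀ (R / 2)) (i : Fin (2 * n)) :
    |kernelAverage ψ f p i.castSucc - f p i.castSucc| ≤ C * ε ^ γ := by
  have hcont := hf.mono (closedBall_subset_of_mem_half hεR.le hp)
  have hmap := map_kernelAverage hψ hcont (EuclideanSpace.proj i.castSucc)
  simp only [PiLp.proj_apply] at hmap
  rw [hmap]
  refine norm_kernelAverage_sub_le hψ
    ((EuclideanSpace.proj (𝕜 := ℝ) i.castSucc).continuous.comp_continuousOn hcont)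
    fun q hq => ?_
  exact h.abs_sub_le_of_dist_le hC hγ (closedBall_subset_of_mem_half hεR.le hp hq)
    (closedBall_subset_of_mem_half hεR.le hp (mem_closedBall_self hε.le)) hq i

lemma HorizontalHolderOn.kernelAverage (hψ : IsAveragingKernel ψ ε)
    (hεR : ε < R / 2) (hf : ContinuousOn f (closedBall p₀ R))
    (h : HorizontalHolderOn f C γ (closedBall p₀ R)) :
    HorizontalHolderOn (kernelAverage ψ f) C γ (closedBall p₀ (R / 2)) := by
  intro x hx y hy i
  have hcx := hf.mono (closedBall_subset_of_mem_half hεR.le hx)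
  have hcy := hf.mono (closedBall_subset_of_mem_half hεR.le hy)
  have hmx := map_kernelAverage hψ hcx (EuclideanSpace.proj i.castSucc)
  have hmy := map_kernelAverage hψ hcy (EuclideanSpace.proj i.castSucc)
  simp only [PiLp.proj_apply] at hmx hmy
  rw [hmx, hmy]
  have hproj := (EuclideanSpace.proj (𝕜 := ℝ) (ι := Fin (2 * n + 1)) i.castSucc).continuous
  refine norm_kernelAverage_sub_kernelAverage_le hψ (hproj.comp_continuousOn hcx)
    (hproj.comp_continuousOn hcy) fun z hz => ?_
  have := h (x - z) (closedBall_subset_of_mem_half hεR.le hx (sub_mem_closedBall_of_mem hz))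
    (y - z) (closedBall_subset_of_mem_half hεR.le hy (sub_mem_closedBall_of_mem hz)) i
  rwa [dist_sub_right] at this

lemma norm_pullA_kernelAverage_le (hψ : IsAveragingKernel ψ ε) (hε : 0 < ε)
    (hεR : ε < R / 2) (hf : ContinuousOn f (closedBall p₀ R)) (hC : 0 ≤ C) (hγ : 0 ≤ γ)
    (h : HorizontalHolderOn f C γ (closedBall p₀ R))
    (hα : ∀ x ∈ closedBall p₀ R, ∀ y ∈ closedBall p₀ R,
      |contactForm n (f y) (f x - f y)| ≤ (C * dist x y ^ γ) ^ 2)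
    {p : EuclideanSpace ℝ (Fin m)} (hp : p ∈ closedBall p₀ (R / 2)) :
    ‖pullA n m (kernelAverage ψ f) p‖ ≤
      (1 + 4 * n) * (C * ε ^ γ) ^ 2 * ∫ z, ‖fderiv ℝ ψ z‖ := by
  have hcont := hf.mono (closedBall_subset_of_mem_half le_rfl hp)
  set N : ℝ := ∫ z, ‖fderiv ℝ ψ z‖ with hN
  have hN0 : 0 ≤ N := integral_nonneg fun _ => norm_nonneg _
  rw [norm_pullA (differentiableAt_kernelAverage hεR hψ hcont)]
  have h1 : ‖(contactForm n (f p)).comp (fderiv ℝ (kernelAverage ψ f) p)‖ ≤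
      (C * ε ^ γ) ^ 2 * N := by
    refine norm_comp_fderiv_kernelAverage_le hεR hψ hcont _ fun q hq => ?_
    refine (hα q (closedBall_subset_of_mem_half hεR.le hp hq) p
      (closedBall_subset_of_mem_half hεR.le hp (mem_closedBall_self hε.le))).trans ?_
    have := mem_closedBall.1 hq
    gcongr
  have h2 := norm_contactForm_sub_comp_le (a := kernelAverage ψ f p) (b := f p)
    (M := C * ε ^ γ) (M' := C * ε ^ γ * N) (by positivity) (by positivity)
    (fun i => abs_kernelAverage_sub_apply_le hψ hε hεR hf hC hγ h hp i)
    (fun i => norm_proj_comp_fderiv_kernelAverage_le hψ hε hεR hf hC hγ h hp i)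
  have h3 := norm_le_norm_add_norm_sub ((contactForm n (f p)).comp
    (fderiv ℝ (kernelAverage ψ f) p)) ((contactForm n (kernelAverage ψ f p)).comp
    (fderiv ℝ (kernelAverage ψ f) p))
  rw [norm_sub_rev] at h3
  linarith

lemma abs_contactForm_kernelAverage_le_linear (hψ : IsAveragingKernel ψ ε) (hε : 0 < ε)
    (hεR : ε < R / 2) (hf : ContinuousOn f (closedBall p₀ R)) (hC : 0 ≤ C) (hγ : 0 ≤ γ)
    (h : HorizontalHolderOn f C γ (closedBall p₀ R)) {δ : ℝ}
    (hδ : ∀ q ∈ closedBall p₀ (R / 2), ‖pullA n m (kernelAverage ψ f) q‖ ≤ δ)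
    {x y : EuclideanSpace ℝ (Fin m)} (hx : x ∈ closedBall p₀ (R / 2))
    (hy : y ∈ closedBall p₀ (R / 2)) :
    |contactForm n (kernelAverage ψ f y) (kernelAverage ψ f x - kernelAverage ψ f y)| ≤
      dist x y * (δ + 4 * n * (C * (C * ε ^ γ * ∫ z, ‖fderiv ℝ ψ z‖)) * dist x y ^ γ) := by
  set g := kernelAverage ψ f with hg
  set N : ℝ := ∫ z, ‖fderiv ℝ ψ z‖ with hN
  have hN0 : 0 ≤ N := integral_nonneg fun _ => norm_nonneg _
  have hseg : segment ℝ y x ⊆ closedBall p₀ (R / 2) :=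
    (convex_closedBall _ _).segment_subset hy hx
  have hdiff : ∀ q ∈ closedBall p₀ (R / 2), DifferentiableAt ℝ g q := fun q hq =>
    differentiableAt_kernelAverage hεR hψ (hf.mono (closedBall_subset_of_mem_half le_rfl hq))
  have hbound : ∀ q ∈ segment ℝ y x, ‖(contactForm n (g y)).comp (fderiv ℝ g q)‖ ≤
      δ + 4 * n * (C * dist x y ^ γ * (C * ε ^ γ * N)) := fun q hq => by
    have hq' := hseg hq
    have h1 := hδ q hq'
    rw [norm_pullA (hdiff q hq')] at h1
    have hqy : dist y q ≤ dist x y := by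
      rw [dist_comm x y, dist_eq_norm_sub' y q, dist_eq_norm_sub' y x]
      exact norm_sub_le_of_mem_segment hq
    have h2 := norm_contactForm_sub_comp_le (a := g y) (b := g q)
      (M := C * dist x y ^ γ) (M' := C * ε ^ γ * N) (by positivity) (by positivity)
      (fun i => (h.kernelAverage hψ hεR hf).abs_sub_le_of_dist_le hC hγ hy hq' hqy i)
      (fun i => norm_proj_comp_fderiv_kernelAverage_le hψ hε hεR hf hC hγ h hq' i)
    have h3 := norm_le_norm_add_norm_sub ((contactForm n (g q)).comp (fderiv ℝ g q))
      ((contactForm n (g y)).comp (fderiv ℝ g q))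
    rw [norm_sub_rev] at h3
    linarith
  have hmvt := (convex_segment y x).norm_image_sub_le_of_norm_hasFDerivWithin_le
    (f := fun q => contactForm n (g y) (g q))
    (fun q hq => ((contactForm n (g y)).hasFDerivAt.comp q
      (hdiff q (hseg hq)).hasFDerivAt).hasFDerivWithinAt)
    hbound (left_mem_segment ℝ y x) (right_mem_segment ℝ y x)
  rw [← map_sub, Real.norm_eq_abs, ← dist_eq_norm] at hmvt
  exact hmvt.trans_eq (by ring)

lemma abs_contactForm_kernelAverage_le (hψ : IsAveragingKernel ψ ε) (hε : 0 < ε)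
    (hεR : ε < R / 2) (hf : ContinuousOn f (closedBall p₀ R)) (hC : 0 ≤ C) (hγ : 1 / 2 < γ)
    (h : HorizontalHolderOn f C γ (closedBall p₀ R)) {δ : ℝ}
    (hδ : ∀ q ∈ closedBall p₀ (R / 2), ‖pullA n m (kernelAverage ψ f) q‖ ≤ δ)
    {x y : EuclideanSpace ℝ (Fin m)} (hx : x ∈ closedBall p₀ (R / 2))
    (hy : y ∈ closedBall p₀ (R / 2)) :
    |contactForm n (kernelAverage ψ f y) (kernelAverage ψ f x - kernelAverage ψ f y)| ≤
      δ * dist x y + 4 * n * C ^ 2 / (1 - 2 ^ (1 - 2 * γ)) * dist x y ^ (2 * γ) := by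
  have hγ0 : 0 ≤ γ := by linarith
  refine sewing_bound (convex_closedBall p₀ (R / 2)) hγ (by positivity)
    (fun x y => contactForm n (kernelAverage ψ f y) (kernelAverage ψ f x - kernelAverage ψ f y))
    (fun x hx y hy => ?_)
    (fun x hx y hy => abs_contactForm_kernelAverage_le_linear hψ hε hεR hf hC hγ0 h hδ hx hy)
    hx hy
  have hw := (convex_closedBall p₀ (R / 2)).midpoint_mem hx hy
  have hhalf : ‖(2 : ℝ)‖⁻¹ * dist x y ≤ dist x y := by
    rw [Real.norm_two]; linarith [dist_nonneg (x := x) (y := y)]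
  have hg := h.kernelAverage hψ hεR hf
  have := abs_contactForm_sub_le_add
    (fun i => hg.abs_sub_le_of_dist_le hC hγ0 hy hw ((dist_right_midpoint x y).trans_le hhalf) i)
    (fun i => hg.abs_sub_le_of_dist_le hC hγ0 hx hw ((dist_left_midpoint x y).trans_le hhalf) i)
  refine this.trans_eq ?_
  rw [rpow_two_mul_eq_sq dist_nonneg]
  ring

lemma tendsto_mollify {d : ℕ} {η : EuclideanSpace ℝ (Fin m) → ℝ} (hη : IsAveragingKernel η 1)
    {Ω : Set (EuclideanSpace ℝ (Fin m))} (hΩ : IsOpen Ω)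
    {f : EuclideanSpace ℝ (Fin m) → EuclideanSpace ℝ (Fin d)} (hf : ContinuousOn f Ω)
    {x : EuclideanSpace ℝ (Fin m)} (hx : x ∈ Ω) :
    Filter.Tendsto (fun ε => mollify m d η ε f x) (𝓝[>] 0) (𝓝 (f x)) := by
  obtain ⟨r, hr, hrΩ⟩ := nhds_basis_closedBall.mem_iff.1 (hΩ.mem_nhds hx)
  refine (nhds_basis_closedBall.tendsto_right_iff).2 fun δ hδ => ?_
  obtain ⟨s, hs, hsδ⟩ := nhds_basis_closedBall.mem_iff.1
    ((hf.continuousAt (hΩ.mem_nhds hx)).preimage_mem_nhds (closedBall_mem_nhds _ hδ))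
  filter_upwards [Ioo_mem_nhdsGT (lt_min hr hs)] with ε hε
  rw [mem_closedBall, dist_eq_norm]
  refine norm_kernelAverage_sub_le (hη.rescale hε.1) (hf.mono
    ((closedBall_subset_closedBall (hε.2.le.trans (min_le_left _ _))).trans hrΩ)) fun q hq => ?_
  rw [← dist_eq_norm]
  exact hsδ (closedBall_subset_closedBall (hε.2.le.trans (min_le_right _ _)) hq)

lemma continuous_contactForm_sub :
    Continuous fun ab : EuclideanSpace ℝ (Fin (2 * n + 1)) × EuclideanSpace ℝ (Fin (2 * n + 1)) =>
      contactForm n ab.2 (ab.1 - ab.2) := by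
  simp only [contactForm_apply, PiLp.sub_apply]
  fun_prop

end Mollification

section Main

variable {n m : ℕ} {γ : ℝ} {Ω : Set (EuclideanSpace ℝ (Fin m))}
  {f : EuclideanSpace ℝ (Fin m) → EuclideanSpace ℝ (Fin (2 * n + 1))}
  {η : EuclideanSpace ℝ (Fin m) → ℝ}

lemma exists_closedBall_subset_ball_inter {E : Type*} [PseudoMetricSpace E] {Ω : Set E}
    (hΩ : IsOpen Ω) {p : E} (hp : p ∈ Ω) {r : ℝ} (hr : 0 < r) :
    ∃ R, 0 < R ∧ closedBall p R ⊆ ball p r ∩ Ω :=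
  nhds_basis_closedBall.mem_iff.1 (Filter.inter_mem (ball_mem_nhds p hr) (hΩ.mem_nhds hp))

lemma le_abs_mul_rpow {a C d : ℝ} (hd : 0 ≤ d) (h : a ≤ C * d ^ γ) : a ≤ |C| * d ^ γ :=
  h.trans (mul_le_mul_of_nonneg_right (le_abs_self C) (Real.rpow_nonneg hd γ))

/-- Near a point where `f` is `γ`-Hölder into the Heisenberg group, the pullbacks of the contact
form under the mollifications are uniformly small. -/
lemma exists_forall_norm_pullA_mollify_le (hγ : 1 / 2 < γ) (hΩ : IsOpen Ω)
    (hf : ContinuousOn f Ω) (hη : IsAveragingKernel η 1) {p₀ : EuclideanSpace ℝ (Fin m)}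
    (hp₀ : p₀ ∈ Ω)
    (hH : ∃ r : ℝ, 0 < r ∧ ∃ C : ℝ, ∀ x ∈ ball p₀ r ∩ Ω, ∀ y ∈ ball p₀ r ∩ Ω,
      dK n (f x) (f y) ≤ C * dist x y ^ γ) {δ : ℝ} (hδ : 0 < δ) :
    ∃ t ∈ 𝓝 p₀, ∃ ε₀ : ℝ, 0 < ε₀ ∧ ∀ ε : ℝ, 0 < ε → ε < ε₀ →
      ∀ p ∈ t, ‖pullA n m (mollify m (2 * n + 1) η ε f) p‖ ≤ δ := by
  obtain ⟨r, hr, C, hC⟩ := hH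
  obtain ⟨R, hR, hRsub⟩ := exists_closedBall_subset_ball_inter hΩ hp₀ hr
  have hdK : ∀ x ∈ closedBall p₀ R, ∀ y ∈ closedBall p₀ R,
      dK n (f x) (f y) ≤ |C| * dist x y ^ γ := fun x hx y hy =>
    le_abs_mul_rpow dist_nonneg (hC x (hRsub hx) y (hRsub hy))
  have hhol : HorizontalHolderOn f |C| γ (closedBall p₀ R) := fun x hx y hy i =>
    (abs_apply_castSucc_sub_le_edistProj _ _ i).trans
      (edistProj_le_of_dK_le (by positivity) (hdK x hx y hy))
  have hα : ∀ x ∈ closedBall p₀ R, ∀ y ∈ closedBall p₀ R,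
      |contactForm n (f y) (f x - f y)| ≤ (|C| * dist x y ^ γ) ^ 2 := fun x hx y hy =>
    abs_contactForm_le_of_dK_le (by positivity) (hdK x hx y hy)
  set N : ℝ := ∫ z, ‖fderiv ℝ η z‖
  have hlim : Filter.Tendsto (fun ε : ℝ => (1 + 4 * n) * |C| ^ 2 * N * ε ^ (2 * γ - 1))
      (𝓝[>] 0) (𝓝 0) := by
    have h0 : Filter.Tendsto (fun ε : ℝ => ε ^ (2 * γ - 1)) (𝓝[>] 0) (𝓝 0) := by
      have := (Real.continuous_rpow_const (q := 2 * γ - 1) (by linarith)).tendsto 0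
      rw [Real.zero_rpow (by linarith)] at this
      exact this.mono_left nhdsWithin_le_nhds
    simpa only [mul_zero] using h0.const_mul ((1 + 4 * n) * |C| ^ 2 * N)
  obtain ⟨ε₁, hε₁, hsmall⟩ := mem_nhdsGT_iff_exists_Ioo_subset.1 (hlim.eventually_le_const hδ)
  refine ⟨closedBall p₀ (R / 2), closedBall_mem_nhds _ (by positivity), min ε₁ (R / 2),
    lt_min hε₁ (by positivity), fun ε hε hεlt p hp => ?_⟩
  have hb := norm_pullA_kernelAverage_le (hη.rescale hε) hε (hεlt.trans_le (min_le_right _ _))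
    (hf.mono fun q hq => (hRsub hq).2) (abs_nonneg C) (by linarith) hhol hα hp
  rw [integral_norm_fderiv_rescale hη hε] at hb
  refine (hb.trans_eq ?_).trans (hsmall ⟨hε, hεlt.trans_le (min_le_left _ _)⟩)
  rw [Real.rpow_sub hε, Real.rpow_one, rpow_two_mul_eq_sq hε.le]
  ring

/-- If the horizontal part of `f` is `γ`-Hölder near `p₀` and the pullbacks of the contact form
under the mollifications tend to zero locally uniformly, then `f` is `γ`-Hölder near `p₀` into the
Heisenberg group. -/
lemma exists_forall_dK_le (hγ : 1 / 2 < γ) (hΩ : IsOpen Ω)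
    (hf : ContinuousOn f Ω) (hη : IsAveragingKernel η 1) {p₀ : EuclideanSpace ℝ (Fin m)}
    (hp₀ : p₀ ∈ Ω)
    (hH : ∃ r : ℝ, 0 < r ∧ ∃ C : ℝ, ∀ x ∈ ball p₀ r ∩ Ω, ∀ y ∈ ball p₀ r ∩ Ω,
      edistProj n (f x) (f y) ≤ C * dist x y ^ γ)
    (hpull : ∀ K : Set (EuclideanSpace ℝ (Fin m)), K ⊆ Ω → IsCompact K →
      ∀ δ : ℝ, 0 < δ → ∃ ε₀ : ℝ, 0 < ε₀ ∧ ∀ ε : ℝ, 0 < ε → ε < ε₀ →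
        ∀ p ∈ K, ‖pullA n m (mollify m (2 * n + 1) η ε f) p‖ ≤ δ) :
    ∃ r : ℝ, 0 < r ∧ ∃ C : ℝ, ∀ x ∈ ball p₀ r ∩ Ω, ∀ y ∈ ball p₀ r ∩ Ω,
      dK n (f x) (f y) ≤ C * dist x y ^ γ := by
  obtain ⟨r, hr, C, hC⟩ := hH
  obtain ⟨R, hR, hRsub⟩ := exists_closedBall_subset_ball_inter hΩ hp₀ hr
  have hproj : ∀ x ∈ closedBall p₀ R, ∀ y ∈ closedBall p₀ R,
      edistProj n (f x) (f y) ≤ |C| * dist x y ^ γ := fun x hx y hy =>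
    le_abs_mul_rpow dist_nonneg (hC x (hRsub hx) y (hRsub hy))
  have hhol : HorizontalHolderOn f |C| γ (closedBall p₀ R) := fun x hx y hy i =>
    (abs_apply_castSucc_sub_le_edistProj _ _ i).trans (hproj x hx y hy)
  have hhalf : closedBall p₀ (R / 2) ⊆ closedBall p₀ R :=
    closedBall_subset_closedBall (by linarith)
  set K : ℝ := 4 * n * |C| ^ 2 / (1 - 2 ^ (1 - 2 * γ)) with hK
  have hK0 : 0 ≤ K := by
    have : (2 : ℝ) ^ (1 - 2 * γ) < 1 :=
      Real.rpow_lt_one_of_one_lt_of_neg (by norm_num) (by linarith)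
    exact div_nonneg (by positivity) (by linarith)
  have hα : ∀ x ∈ closedBall p₀ (R / 2), ∀ y ∈ closedBall p₀ (R / 2),
      |contactForm n (f y) (f x - f y)| ≤ K * dist x y ^ (2 * γ) := by
    intro x hx y hy
    have hlim := ((continuous_contactForm_sub (n := n)).tendsto (f x, f y)).comp
      ((tendsto_mollify hη hΩ hf (hRsub (hhalf hx)).2).prodMk_nhds
        (tendsto_mollify hη hΩ hf (hRsub (hhalf hy)).2))
    have hδ : ∀ δ ∈ Ioi (0 : ℝ),
        |contactForm n (f y) (f x - f y)| ≤ δ * dist x y + K * dist x y ^ (2 * γ) := by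
      intro δ hδ
      obtain ⟨ε₀, hε₀, hε⟩ := hpull (closedBall p₀ (R / 2))
        (fun q hq => (hRsub (hhalf hq)).2) (isCompact_closedBall _ _) δ hδ
      refine le_of_tendsto hlim.abs ?_
      filter_upwards [Ioo_mem_nhdsGT (lt_min hε₀ (half_pos hR))] with ε hεmem
      exact abs_contactForm_kernelAverage_le (hη.rescale hεmem.1) hεmem.1
        (hεmem.2.trans_le (min_le_right _ _)) (hf.mono fun q hq => (hRsub hq).2)
        (abs_nonneg C) hγ hhol (hε ε hεmem.1 (hεmem.2.trans_le (min_le_left _ _))) hx hy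
    have hδlim : Filter.Tendsto (fun δ : ℝ => δ * dist x y + K * dist x y ^ (2 * γ)) (𝓝[>] 0)
        (𝓝 (0 * dist x y + K * dist x y ^ (2 * γ))) :=
      ((Filter.tendsto_id.mul_const _).add_const _).mono_left nhdsWithin_le_nhds
    rw [zero_mul, zero_add] at hδlim
    exact ge_of_tendsto hδlim (Filter.eventually_of_mem self_mem_nhdsWithin hδ)
  refine ⟨R / 2, half_pos hR, |C| + K + 1, fun x hx y hy => ?_⟩
  have hx' := ball_subset_closedBall hx.1
  have hy' := ball_subset_closedBall hy.1
  refine dK_le_of_le (abs_nonneg C) hK0 (by positivity) (hproj x (hhalf hx') y (hhalf hy')) ?_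
  rw [← rpow_two_mul_eq_sq dist_nonneg]
  exact hα x hx' y hy'

end Main

/-- Theorem 8.1 of the paper. A continuous map `f : Ω → ℝ^{2n+1}`,
`1/2 < γ ≤ 1`, is locally `γ`-Hölder into `ℍ^n` iff (a) its projection onto the first `2n`
coordinates is locally `γ`-Hölder and (b) `f_ε^*α → 0` uniformly on compact subsets of `Ω`. -/
theorem stmt7 (m n : ℕ) (γ : ℝ) (hγ : 1/2 < γ) (hγ1 : γ ≤ 1)
    (Ω : Set (EuclideanSpace ℝ (Fin m))) (hΩ : IsOpen Ω)
    (f : EuclideanSpace ℝ (Fin m) → EuclideanSpace ℝ (Fin (2*n+1)))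
    (hf : ContinuousOn f Ω)
    (η : EuclideanSpace ℝ (Fin m) → ℝ)
    (hη₁ : ContDiff ℝ (⊤ : ℕ∞) η) (hη₂ : Function.support η ⊆ closedBall 0 1)
    (hη₃ : ∀ z, 0 ≤ η z) (hη₄ : ∫ z, η z = 1) :
    (∀ p ∈ Ω, ∃ r : ℝ, 0 < r ∧ ∃ C : ℝ, ∀ x ∈ ball p r ∩ Ω, ∀ y ∈ ball p r ∩ Ω,
        dK n (f x) (f y) ≤ C * dist x y ^ γ)
    ↔
    ((∀ p ∈ Ω, ∃ r : ℝ, 0 < r ∧ ∃ C : ℝ, ∀ x ∈ ball p r ∩ Ω, ∀ y ∈ ball p r ∩ Ω,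
        edistProj n (f x) (f y) ≤ C * dist x y ^ γ) ∧
     (∀ K : Set (EuclideanSpace ℝ (Fin m)), K ⊆ Ω → IsCompact K →
        ∀ δ : ℝ, 0 < δ → ∃ ε₀ : ℝ, 0 < ε₀ ∧ ∀ ε : ℝ, 0 < ε → ε < ε₀ →
          ∀ p ∈ K, ‖pullA n m (mollify m (2*n+1) η ε f) p‖ ≤ δ)) := by
  have hη : IsAveragingKernel η 1 := ⟨hη₁.of_le (by exact_mod_cast le_top), hη₂, hη₃, hη₄⟩
  constructor
  · refine fun hH => ⟨fun p hp => ?_, fun K hKΩ hK δ hδ => ?_⟩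
    · obtain ⟨r, hr, C, hC⟩ := hH p hp
      exact ⟨r, hr, |C|, fun x hx y hy => edistProj_le_of_dK_le (by positivity)
        (le_abs_mul_rpow dist_nonneg (hC x hx y hy))⟩
    · refine hK.induction_on (p := fun s => ∃ ε₀ : ℝ, 0 < ε₀ ∧ ∀ ε : ℝ, 0 < ε → ε < ε₀ →
        ∀ p ∈ s, ‖pullA n m (mollify m (2*n+1) η ε f) p‖ ≤ δ) ⟨1, one_pos, by simp⟩
        ?_ ?_ fun p hp => ?_
      · rintro s t hst ⟨ε₀, hε₀, h⟩
        exact ⟨ε₀, hε₀, fun ε hε hlt p hp => h ε hε hlt p (hst hp)⟩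
      · rintro s t ⟨ε₁, hε₁, h₁⟩ ⟨ε₂, hε₂, h₂⟩
        refine ⟨min ε₁ ε₂, lt_min hε₁ hε₂, fun ε hε hlt p hp => hp.elim (fun h => ?_) fun h => ?_⟩
        · exact h₁ ε hε (hlt.trans_le (min_le_left _ _)) p h
        · exact h₂ ε hε (hlt.trans_le (min_le_right _ _)) p h
      · obtain ⟨t, ht, h⟩ := exists_forall_norm_pullA_mollify_le hγ hΩ hf hη (hKΩ hp)
          (hH p (hKΩ hp)) hδ
        exact ⟨t, mem_nhdsWithin_of_mem_nhds ht, h⟩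
  · rintro ⟨ha, hb⟩ p hp
    exact exists_forall_dK_le hγ hΩ hf hη hp (ha p hp) hb
end

section
/- Let α, β ∈ (0,1] with α + β > 1. There is a constant C(α, β), depending only on α and β, such that for every interval [a,b], every f ∈ C^{0,α}([a,b]) and every Lipschitz function g : [a,b] → ℝ with f(a) = f(b) and g(a) = g(b), one has |∫_a^b f(x)·g'(x) dx| ≤ C(α,β)·(b−a)^{α+β}·[f]_α·[g]_β, where g' denotes the almost-everywhere derivative of g. -/
open Set

/-- A function which satisfies a Hölder estimate with positive exponent on a set is continuous
there. -/
lemma continuousOn_of_abs_sub_le_rpow {f : ℝ → ℝ} {s : Set ℝ} {c α : ℝ} (hα : 0 < α)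
    (hf : ∀ x ∈ s, ∀ y ∈ s, |f x - f y| ≤ c * |x - y| ^ α) : ContinuousOn f s := by
  intro x hx
  rw [ContinuousWithinAt, tendsto_iff_dist_tendsto_zero]
  have hlim : Filter.Tendsto (fun y : ℝ => c * |y - x| ^ α) (nhdsWithin x s) (nhds 0) := by
    have hcont : ContinuousAt (fun y : ℝ => c * |y - x| ^ α) x := by
      have : ContinuousAt (fun y : ℝ => |y - x|) x := by fun_prop
      exact continuousAt_const.mul (this.rpow_const (Or.inr hα.le))
    have h := hcont.tendsto.mono_left (nhdsWithin_le_nhds (s := s))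
    simpa [Real.zero_rpow hα.ne'] using h
  refine squeeze_zero' (Filter.Eventually.of_forall fun y => dist_nonneg) ?_ hlim
  filter_upwards [self_mem_nhdsWithin] with y hy
  exact hf y hy x hx

/-- If `g` is Lipschitz on `[u, v]` and `f` is continuous there, then `f * g'` is integrable. -/
lemma LipschitzOnWith.intervalIntegrable_mul_deriv {f g : ℝ → ℝ} {u v : ℝ} {L : NNReal}
    (huv : u ≤ v) (hf : ContinuousOn f (Icc u v)) (hg : LipschitzOnWith L g (Icc u v)) :
    IntervalIntegrable (fun x => f x * deriv g x) MeasureTheory.volume u v := by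
  rw [← uIcc_of_le huv] at hf hg
  exact hg.absolutelyContinuousOnInterval.intervalIntegrable_deriv.continuousOn_mul hf

/-- The error of the one-point Riemann–Stieltjes sum is additive under splitting an interval, up
to the product of the two increments. -/
lemma integral_sub_mul_deriv_split {f g : ℝ → ℝ} {u m v : ℝ} {L : NNReal}
    (hum : u ≤ m) (hmv : m ≤ v) (hf : ContinuousOn f (Icc u v))
    (hg : LipschitzOnWith L g (Icc u v)) :
    ∫ x in u..v, (f x - f u) * deriv g x =
      (∫ x in u..m, (f x - f u) * deriv g x) + (∫ x in m..v, (f x - f m) * deriv g x) +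
        (f m - f u) * (g v - g m) := by
  have hleft : Icc u m ⊆ Icc u v := Icc_subset_Icc_right hmv
  have hright : Icc m v ⊆ Icc u v := Icc_subset_Icc_left hum
  have hfc (c : ℝ) : ContinuousOn (fun x => f x - c) (Icc u v) := hf.sub continuousOn_const
  have hftc : ∫ x in m..v, deriv g x = g v - g m := by
    have hg' := hg.mono hright
    rw [← uIcc_of_le hmv] at hg'
    exact hg'.absolutelyContinuousOnInterval.integral_deriv_eq_sub
  have hsplit : ∫ x in m..v, (f x - f u) * deriv g x =
      (∫ x in m..v, (f x - f m) * deriv g x) + (f m - f u) * (g v - g m) := by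
    rw [← hftc, ← intervalIntegral.integral_const_mul, ← intervalIntegral.integral_add]
    · congr 1
      ext x
      ring
    · exact (hg.mono hright).intervalIntegrable_mul_deriv hmv ((hfc _).mono hright)
    · exact (hg.mono hright).intervalIntegrable_mul_deriv hmv continuousOn_const
  rw [add_assoc, ← hsplit]
  exact (intervalIntegral.integral_add_adjacent_intervals
    ((hg.mono hleft).intervalIntegrable_mul_deriv hum ((hfc _).mono hleft))
    ((hg.mono hright).intervalIntegrable_mul_deriv hmv ((hfc _).mono hright))).symm

/-- The bound on the error of the one-point sum obtained from `|g'| ≤ L`. -/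
lemma abs_integral_sub_mul_deriv_le_of_lipschitz {f g : ℝ → ℝ} {u v α Cf : ℝ} {L : NNReal}
    (hα : 0 < α) (hCf : 0 ≤ Cf) (huv : u ≤ v)
    (hf : ∀ x ∈ Icc u v, ∀ y ∈ Icc u v, |f x - f y| ≤ Cf * |x - y| ^ α)
    (hg : LipschitzOnWith L g (Icc u v)) :
    |∫ x in u..v, (f x - f u) * deriv g x| ≤ Cf * L * (v - u) ^ α * (v - u) := by
  have h : ‖∫ x in u..v, (f x - f u) * deriv g x‖ ≤ Cf * L * (v - u) ^ α * |v - u| := by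
    refine intervalIntegral.norm_integral_le_of_norm_le_const_ae ?_
    have hne : ∀ᵐ x : ℝ, x ≠ v := by simp [MeasureTheory.ae_iff]
    filter_upwards [hne] with x hxv hx
    rw [uIoc_of_le huv] at hx
    have hxlt : x < v := lt_of_le_of_ne hx.2 hxv
    have hderiv : ‖deriv g x‖ ≤ L :=
      norm_deriv_le_of_lipschitzOn (Icc_mem_nhds hx.1 hxlt) hg
    have hfx : ‖f x - f u‖ ≤ Cf * (v - u) ^ α := by
      refine (hf x ⟨hx.1.le, hx.2⟩ u ⟨le_rfl, huv⟩).trans ?_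
      rw [abs_of_pos (sub_pos.2 hx.1)]
      gcongr
      linarith [hx.1]
    rw [norm_mul]
    calc ‖f x - f u‖ * ‖deriv g x‖ ≤ Cf * (v - u) ^ α * L := by gcongr
      _ = Cf * L * (v - u) ^ α := by ring
  rwa [abs_of_nonneg (sub_nonneg.2 huv)] at h

/-- The Young estimate with a remainder that vanishes under iterated bisection. -/
lemma abs_integral_sub_mul_deriv_le_add {α β : ℝ} (hα : 0 < α) (hαβ : 1 < α + β)
    {f g : ℝ → ℝ} {Cf Cg : ℝ} {L : NNReal} (hCf : 0 ≤ Cf) (n : ℕ) {u v : ℝ} (huv : u ≤ v)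
    (hf : ∀ x ∈ Icc u v, ∀ y ∈ Icc u v, |f x - f y| ≤ Cf * |x - y| ^ α)
    (hg : LipschitzOnWith L g (Icc u v))
    (hgβ : ∀ x ∈ Icc u v, ∀ y ∈ Icc u v, |g x - g y| ≤ Cg * |x - y| ^ β) :
    |∫ x in u..v, (f x - f u) * deriv g x| ≤
      (2 ^ (α + β) - 2)⁻¹ * (v - u) ^ (α + β) * Cf * Cg +
        Cf * L * (v - u) ^ α * (v - u) * ((2 ^ α)⁻¹) ^ n := by
  have hS : (2 : ℝ) < 2 ^ (α + β) := by
    simpa using Real.rpow_lt_rpow_of_exponent_lt (one_lt_two (α := ℝ)) hαβ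
  rcases huv.eq_or_lt with rfl | hlt
  · simp [Real.zero_rpow (by linarith : α + β ≠ 0)]
  induction n generalizing u v with
  | zero =>
    have h := abs_integral_sub_mul_deriv_le_of_lipschitz hα hCf huv hf hg
    have hCg : 0 ≤ Cg := by
      have h1 := (abs_nonneg _).trans (hgβ v ⟨huv, le_rfl⟩ u ⟨le_rfl, huv⟩)
      rw [abs_of_pos (sub_pos.2 hlt)] at h1
      exact nonneg_of_mul_nonneg_left h1 (Real.rpow_pos_of_pos (sub_pos.2 hlt) β)
    have h0 : 0 ≤ (2 ^ (α + β) - 2)⁻¹ * (v - u) ^ (α + β) * Cf * Cg := by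
      have := inv_pos.2 (sub_pos.2 hS)
      have := Real.rpow_nonneg (sub_nonneg.2 huv) (α + β)
      positivity
    simpa using h.trans (le_add_of_nonneg_left h0)
  | succ n ih =>
    have hd : 0 < v - u := sub_pos.2 hlt
    obtain ⟨m, hm⟩ : ∃ m, m = (u + v) / 2 := ⟨_, rfl⟩
    have hum : u < m := by linarith
    have hmv : m < v := by linarith
    have hleft : Icc u m ⊆ Icc u v := Icc_subset_Icc_right hmv.le
    have hright : Icc m v ⊆ Icc u v := Icc_subset_Icc_left hum.le
    have h1 := ih hum.le (fun x hx y hy => hf x (hleft hx) y (hleft hy)) (hg.mono hleft)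
      (fun x hx y hy => hgβ x (hleft hx) y (hleft hy)) hum
    have h2 := ih hmv.le (fun x hx y hy => hf x (hright hx) y (hright hy)) (hg.mono hright)
      (fun x hx y hy => hgβ x (hright hx) y (hright hy)) hmv
    have hmu : m - u = (v - u) / 2 := by linarith
    have hvm : v - m = (v - u) / 2 := by linarith
    have hfm := hf m ⟨hum.le, hmv.le⟩ u ⟨le_rfl, huv⟩
    have hgm := hgβ v ⟨huv, le_rfl⟩ m ⟨hum.le, hmv.le⟩
    rw [hmu, abs_of_pos (half_pos hd)] at hfm
    rw [hvm, abs_of_pos (half_pos hd)] at hgm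
    have h3 : |(f m - f u) * (g v - g m)| ≤
        (Cf * ((v - u) / 2) ^ α) * (Cg * ((v - u) / 2) ^ β) := by
      rw [abs_mul]
      exact mul_le_mul hfm hgm (abs_nonneg _) ((abs_nonneg _).trans hfm)
    rw [hmu] at h1
    rw [hvm] at h2
    rw [integral_sub_mul_deriv_split hum.le hmv.le (continuousOn_of_abs_sub_le_rpow hα hf) hg]
    refine (abs_add_three _ _ _).trans ((add_le_add (add_le_add h1 h2) h3).trans_eq ?_)
    rw [Real.div_rpow hd.le zero_le_two, Real.div_rpow hd.le zero_le_two,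
      Real.div_rpow hd.le zero_le_two, Real.rpow_add hd, pow_succ]
    have hpow : (2 : ℝ) ^ (α + β) = 2 ^ α * 2 ^ β := Real.rpow_add two_pos α β
    rw [hpow] at hS ⊢
    have hA : (0 : ℝ) < 2 ^ α := by positivity
    have hB : (0 : ℝ) < 2 ^ β := by positivity
    generalize (2 : ℝ) ^ α = A at *
    generalize (2 : ℝ) ^ β = B at *
    have hAB : A * B - 2 ≠ 0 := by linarith
    field_simp
    ring

/-- Lemma 3.9 of the paper. If `α + β > 1`, there is a constant `C(α,β)`
such that for every interval `[a,b]`, every `f ∈ C^{0,α}([a,b])` and every Lipschitz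
`g : [a,b] → ℝ` with `f(a) = f(b)` and `g(a) = g(b)`,
`|∫_a^b f g'| ≤ C(α,β) (b-a)^{α+β} [f]_α [g]_β`. -/
theorem stmt9 (α β : ℝ) (hα0 : 0 < α) (hα1 : α ≤ 1) (hβ0 : 0 < β) (hβ1 : β ≤ 1)
    (hαβ : 1 < α + β) :
    ∃ C : ℝ, ∀ a b : ℝ, a ≤ b → ∀ f g : ℝ → ℝ, ∀ Cf Cg : ℝ,
      (∀ x ∈ Icc a b, ∀ y ∈ Icc a b, |f x - f y| ≤ Cf * |x - y| ^ α) →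
      (∃ L : NNReal, LipschitzOnWith L g (Icc a b)) →
      (∀ x ∈ Icc a b, ∀ y ∈ Icc a b, |g x - g y| ≤ Cg * |x - y| ^ β) →
      f a = f b → g a = g b →
      |∫ x in a..b, f x * deriv g x| ≤ C * (b - a) ^ (α + β) * Cf * Cg := by
  refine ⟨(2 ^ (α + β) - 2)⁻¹, ?_⟩
  rintro a b hab f g Cf Cg hf ⟨L, hg⟩ hgβ - hgab
  rcases hab.eq_or_lt with rfl | hlt
  · simp [Real.zero_rpow (by linarith : α + β ≠ 0)]
  have hCf : 0 ≤ Cf := by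
    have h := (abs_nonneg _).trans (hf b ⟨hab, le_rfl⟩ a ⟨le_rfl, hab⟩)
    rw [abs_of_pos (sub_pos.2 hlt)] at h
    exact nonneg_of_mul_nonneg_left h (Real.rpow_pos_of_pos (sub_pos.2 hlt) α)
  have heq : ∫ x in a..b, f x * deriv g x = ∫ x in a..b, (f x - f a) * deriv g x := by
    have hftc : ∫ x in a..b, deriv g x = g b - g a := by
      have hg' := hg
      rw [← uIcc_of_le hab] at hg'
      exact hg'.absolutelyContinuousOnInterval.integral_deriv_eq_sub
    simp_rw [sub_mul]
    rw [intervalIntegral.integral_sub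
      (hg.intervalIntegrable_mul_deriv hab (continuousOn_of_abs_sub_le_rpow hα0 hf))
      (hg.intervalIntegrable_mul_deriv hab continuousOn_const),
      intervalIntegral.integral_const_mul, hftc, hgab]
    simp
  rw [heq]
  have hr : ((2 : ℝ) ^ α)⁻¹ < 1 := inv_lt_one_of_one_lt₀ (Real.one_lt_rpow one_lt_two hα0)
  have hlim := ((tendsto_pow_atTop_nhds_zero_of_lt_one (by positivity) hr).const_mul
    (Cf * L * (b - a) ^ α * (b - a))).const_add
      ((2 ^ (α + β) - 2)⁻¹ * (b - a) ^ (α + β) * Cf * Cg)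
  rw [mul_zero, add_zero] at hlim
  exact ge_of_tendsto' hlim fun n =>
    abs_integral_sub_mul_deriv_le_add hα0 hαβ hCf n hab hf hg hgβ
end

section
/- Let α, β ∈ (0,1] with α + β > 1, and let a < b. (1) There is a constant C(α, β, b−a) such that for every f ∈ C^{0,α}([a,b]) and every Lipschitz g : [a,b] → ℝ, |∫_a^b f(x)·g'(x) dx| ≤ C(α, β, b−a)·‖f‖_{C^{0,α}}·[g]_β. (2) There is a constant C(α, β), depending only on α and β, such that if in addition f(p) = 0 for some p ∈ [a,b], then |∫_a^b f(x)·g'(x) dx| ≤ C(α,β)·(b−a)^{α+β}·[f]_α·[g]_β. Here g' denotes the almost-everywhere derivative of g. -/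
open Set

/-- **Sewing estimate.** A two-parameter function that is superlinearly small on short intervals
and additive at midpoints up to an error `N * (length / 2) ^ θ` with `1 < θ` is bounded by a
multiple of `length ^ θ` that does not depend on the a priori smallness constant `M`. -/
theorem abs_le_of_abs_sub_midpoint_le {D : ℝ → ℝ → ℝ} {a b γ θ M N : ℝ} (hγ : 1 < γ) (hθ : 1 < θ)
    (hsmall : ∀ s t, a ≤ s → s ≤ t → t ≤ b → |D s t| ≤ M * (t - s) ^ γ)
    (hmid : ∀ s t, a ≤ s → s ≤ t → t ≤ b →
      |D s t - D s ((s + t) / 2) - D ((s + t) / 2) t| ≤ N * ((t - s) / 2) ^ θ)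
    {s t : ℝ} (has : a ≤ s) (hst : s ≤ t) (htb : t ≤ b) :
    |D s t| ≤ N / (2 ^ θ - 2) * (t - s) ^ θ := by
  have two_lt : ∀ r : ℝ, 1 < r → (2 : ℝ) < 2 ^ r := fun r hr => by
    simpa using Real.rpow_lt_rpow_of_exponent_lt (x := 2) (by norm_num) hr
  have hθ2 := two_lt θ hθ
  have hγ2 := two_lt γ hγ
  have iterate : ∀ n : ℕ, ∀ s t, a ≤ s → s ≤ t → t ≤ b →
      |D s t| ≤ N / (2 ^ θ - 2) * (t - s) ^ θ + M * (t - s) ^ γ * (2 / 2 ^ γ) ^ n := by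
    have hN : N = N / (2 ^ θ - 2) * (2 ^ θ - 2) := by
      field_simp [(sub_pos.2 hθ2).ne']
    generalize N / (2 ^ θ - 2) = K at hN ⊢
    intro n
    induction n with
    | zero =>
      intro s t has hst htb
      have hlen := hmid s t has hst htb
      have hN0 : 0 ≤ N * ((t - s) / 2) ^ θ := (abs_nonneg _).trans hlen
      have hK0 : 0 ≤ K * (t - s) ^ θ := by
        rw [Real.div_rpow (by linarith) (by norm_num)] at hN0
        have : K * (t - s) ^ θ = N * ((t - s) ^ θ / 2 ^ θ) * (2 ^ θ / (2 ^ θ - 2)) := by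
          rw [hN]; field_simp [(sub_pos.2 hθ2).ne']
        rw [this]
        exact mul_nonneg hN0 (div_nonneg (by linarith) (by linarith))
      have := hsmall s t has hst htb
      simp only [pow_zero, mul_one]
      linarith
    | succ n ih =>
      intro s t has hst htb
      have hl := ih s ((s + t) / 2) has (by linarith) (by linarith)
      have hr := ih ((s + t) / 2) t (by linarith) (by linarith) htb
      have hm := hmid s t has hst htb
      rw [show (s + t) / 2 - s = (t - s) / 2 by ring] at hl
      rw [show t - (s + t) / 2 = (t - s) / 2 by ring] at hr
      rw [Real.div_rpow (by linarith) (by norm_num)] at hl hr hm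
      rw [Real.div_rpow (by linarith) (by norm_num)] at hl hr
      have htri : |D s t| ≤ |D s t - D s ((s + t) / 2) - D ((s + t) / 2) t|
          + |D s ((s + t) / 2)| + |D ((s + t) / 2) t| := by
        grind
      have heq : K * (t - s) ^ θ + M * (t - s) ^ γ * (2 / 2 ^ γ) ^ (n + 1)
          = N * ((t - s) ^ θ / 2 ^ θ)
            + 2 * (K * ((t - s) ^ θ / 2 ^ θ)
              + M * ((t - s) ^ γ / 2 ^ γ) * (2 / 2 ^ γ) ^ n) := by
        rw [hN, pow_succ]
        field_simp
        ring
      linarith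
  have hlim : Filter.Tendsto
      (fun n : ℕ => N / (2 ^ θ - 2) * (t - s) ^ θ + M * (t - s) ^ γ * (2 / 2 ^ γ) ^ n)
      Filter.atTop (nhds (N / (2 ^ θ - 2) * (t - s) ^ θ + M * (t - s) ^ γ * 0)) :=
    ((tendsto_pow_atTop_nhds_zero_of_lt_one (by positivity)
      ((div_lt_one (by linarith)).2 hγ2)).const_mul _).const_add _
  rw [mul_zero, add_zero] at hlim
  exact ge_of_tendsto' hlim fun n => iterate n s t has hst htb

/-- The constant in a Hölder bound on a nondegenerate interval is nonnegative. -/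
theorem nonneg_of_forall_abs_sub_le_mul_rpow {f : ℝ → ℝ} {a b r K : ℝ} (hab : a < b)
    (hf : ∀ x ∈ Icc a b, ∀ y ∈ Icc a b, |f x - f y| ≤ K * |x - y| ^ r) : 0 ≤ K := by
  have h := (abs_nonneg _).trans
    (hf b (right_mem_Icc.2 hab.le) a (left_mem_Icc.2 hab.le))
  exact nonneg_of_mul_nonneg_left h
    (Real.rpow_pos_of_pos (abs_pos.2 (sub_pos.2 hab).ne') r)

open MeasureTheory in
/-- **Young–Loève estimate** for a Hölder integrand and a Lipschitz integrator. -/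
theorem abs_integral_mul_deriv_sub_le {f g : ℝ → ℝ} {a b α β Cf Cg : ℝ} {L : NNReal}
    (hα : 0 < α) (hαβ : 1 < α + β) (hab : a < b)
    (hf : ∀ x ∈ Icc a b, ∀ y ∈ Icc a b, |f x - f y| ≤ Cf * |x - y| ^ α)
    (hL : LipschitzOnWith L g (Icc a b))
    (hg : ∀ x ∈ Icc a b, ∀ y ∈ Icc a b, |g x - g y| ≤ Cg * |x - y| ^ β) :
    |(∫ x in a..b, f x * deriv g x) - f a * (g b - g a)|
      ≤ Cf * Cg / (2 ^ (α + β) - 2) * (b - a) ^ (α + β) := by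
  have hCf := nonneg_of_forall_abs_sub_le_mul_rpow hab hf
  have hfc : ContinuousOn f (Icc a b) := by
    refine HolderOnWith.continuousOn (C := Cf.toNNReal) (r := α.toNNReal) ?_
      (Real.toNNReal_pos.2 hα)
    intro x hx y hy
    rw [Real.coe_toNNReal α hα.le, edist_dist, edist_dist, ENNReal.ofReal_rpow_of_nonneg dist_nonneg hα.le,
      ← ENNReal.ofReal, ← ENNReal.ofReal_mul hCf]
    exact ENNReal.ofReal_le_ofReal (hf x hx y hy)
  have hsub : ∀ s t, a ≤ s → s ≤ t → t ≤ b → uIcc s t ⊆ Icc a b := fun s t has hst htb => by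
    rw [uIcc_of_le hst]; exact Icc_subset_Icc has htb
  have hac : ∀ s t, a ≤ s → s ≤ t → t ≤ b → AbsolutelyContinuousOnInterval g s t :=
    fun s t has hst htb =>
      (hL.mono (hsub s t has hst htb)).absolutelyContinuousOnInterval
  have hint : ∀ s t, a ≤ s → s ≤ t → t ≤ b →
      IntervalIntegrable (fun x => f x * deriv g x) volume s t := fun s t has hst htb =>
    (hac s t has hst htb).intervalIntegrable_deriv.continuousOn_mul
      (hfc.mono (hsub s t has hst htb))
  refine abs_le_of_abs_sub_midpoint_le (a := a) (b := b) (γ := α + 1) (M := Cf * L)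
    (D := fun s t => (∫ x in s..t, f x * deriv g x) - f s * (g t - g s))
    (by linarith) hαβ ?_ ?_ le_rfl hab.le le_rfl
  · intro s t has hst htb
    have hD : (∫ x in s..t, f x * deriv g x) - f s * (g t - g s)
        = ∫ x in s..t, (f x - f s) * deriv g x := by
      simp_rw [sub_mul]
      rw [intervalIntegral.integral_sub (hint s t has hst htb)
        ((hac s t has hst htb).intervalIntegrable_deriv.const_mul _),
        intervalIntegral.integral_const_mul, (hac s t has hst htb).integral_deriv_eq_sub]
    have hbound : ∀ᵐ x, x ∈ uIoc s t →
        ‖(f x - f s) * deriv g x‖ ≤ Cf * (t - s) ^ α * L := by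
      filter_upwards [Measure.ae_ne volume t] with x hxt hx
      rw [uIoc_of_le hst] at hx
      have hxt' : x < t := lt_of_le_of_ne hx.2 hxt
      rw [norm_mul]
      refine mul_le_mul ?_ (norm_deriv_le_of_lipschitzOn
        (Icc_mem_nhds (has.trans_lt hx.1) (hxt'.trans_le htb)) hL) (norm_nonneg _)
        (mul_nonneg hCf (Real.rpow_nonneg (by linarith) _))
      refine (hf x ⟨by linarith [hx.1], by linarith⟩ s ⟨has, by linarith⟩).trans ?_
      rw [abs_of_pos (sub_pos.2 hx.1)]
      gcongr
      linarith [hx.1]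
    have h := intervalIntegral.norm_integral_le_of_norm_le_const_ae hbound
    rw [← hD, Real.norm_eq_abs, abs_of_nonneg (sub_nonneg.2 hst)] at h
    refine h.trans_eq ?_
    rw [Real.rpow_add_one' (sub_nonneg.2 hst) (by linarith)]
    ring
  · intro s t has hst htb
    have hsplit := intervalIntegral.integral_add_adjacent_intervals
      (hint s ((s + t) / 2) has (by linarith) (by linarith))
      (hint ((s + t) / 2) t (by linarith) (by linarith) htb)
    have hm : (s + t) / 2 ∈ Icc a b := ⟨by linarith, by linarith⟩
    have hfm := hf _ hm s ⟨has, by linarith⟩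
    have hgm := hg t ⟨by linarith, htb⟩ _ hm
    have hdefect : (∫ x in s..t, f x * deriv g x) - f s * (g t - g s)
        - ((∫ x in s..(s + t) / 2, f x * deriv g x) - f s * (g ((s + t) / 2) - g s))
        - ((∫ x in (s + t) / 2..t, f x * deriv g x)
          - f ((s + t) / 2) * (g t - g ((s + t) / 2)))
        = (f ((s + t) / 2) - f s) * (g t - g ((s + t) / 2)) := by
      rw [← hsplit]; ring
    have hhalf : 0 ≤ (t - s) / 2 := by linarith
    rw [show (s + t) / 2 - s = (t - s) / 2 by ring, abs_of_nonneg hhalf] at hfm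
    rw [show t - (s + t) / 2 = (t - s) / 2 by ring, abs_of_nonneg hhalf] at hgm
    simp only [hdefect, abs_mul]
    refine (mul_le_mul hfm hgm (abs_nonneg _) ((abs_nonneg _).trans hfm)).trans_eq ?_
    rw [Real.rpow_add' hhalf (by linarith)]
    ring

/-- Corollary 3.10 of the paper. Let `α + β > 1` and `a < b`.
(1) There is `C(α,β,b-a)` with `|∫_a^b f g'| ≤ C ‖f‖_{C^{0,α}} [g]_β` for every
`f ∈ C^{0,α}([a,b])` and Lipschitz `g`.
(2) There is `C(α,β)`, depending only on `α` and `β`, such that if moreover `f(p) = 0` for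
some `p ∈ [a,b]`, then `|∫_a^b f g'| ≤ C (b-a)^{α+β} [f]_α [g]_β`. -/
theorem stmt10 (α β : ℝ) (hα0 : 0 < α) (hα1 : α ≤ 1) (hβ0 : 0 < β) (hβ1 : β ≤ 1)
    (hαβ : 1 < α + β) (a b : ℝ) (hab : a < b) :
    (∃ C : ℝ, ∀ f g : ℝ → ℝ, ∀ Bf Cf Cg : ℝ,
      (∀ x ∈ Icc a b, |f x| ≤ Bf) →
      (∀ x ∈ Icc a b, ∀ y ∈ Icc a b, |f x - f y| ≤ Cf * |x - y| ^ α) →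
      (∃ L : NNReal, LipschitzOnWith L g (Icc a b)) →
      (∀ x ∈ Icc a b, ∀ y ∈ Icc a b, |g x - g y| ≤ Cg * |x - y| ^ β) →
      |∫ x in a..b, f x * deriv g x| ≤ C * (Bf + Cf) * Cg) ∧
    (∃ C : ℝ, ∀ a' b' : ℝ, a' < b' → ∀ f g : ℝ → ℝ, ∀ Cf Cg : ℝ,
      (∀ x ∈ Icc a' b', ∀ y ∈ Icc a' b', |f x - f y| ≤ Cf * |x - y| ^ α) →
      (∃ L : NNReal, LipschitzOnWith L g (Icc a' b')) →
      (∀ x ∈ Icc a' b', ∀ y ∈ Icc a' b', |g x - g y| ≤ Cg * |x - y| ^ β) →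
      (∃ p ∈ Icc a' b', f p = 0) →
      |∫ x in a'..b', f x * deriv g x| ≤ C * (b' - a') ^ (α + β) * Cf * Cg) := by
  constructor
  · refine ⟨(b - a) ^ β + (b - a) ^ (α + β) / (2 ^ (α + β) - 2), ?_⟩
    rintro f g Bf Cf Cg hB hf ⟨L, hL⟩ hg
    have hCf := nonneg_of_forall_abs_sub_le_mul_rpow hab hf
    have hCg := nonneg_of_forall_abs_sub_le_mul_rpow hab hg
    have ha := left_mem_Icc.2 hab.le
    have hgab := hg b (right_mem_Icc.2 hab.le) a ha
    rw [abs_of_pos (sub_pos.2 hab)] at hgab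
    have hBf := (abs_nonneg _).trans (hB a ha)
    have hprod := mul_le_mul (hB a ha) hgab (abs_nonneg _) hBf
    rw [← abs_mul] at hprod
    have hmain := abs_integral_mul_deriv_sub_le hα0 hαβ hab hf hL hg
    have htri := abs_sub_abs_le_abs_sub (∫ x in a..b, f x * deriv g x) (f a * (g b - g a))
    have h2 : (0 : ℝ) < 2 ^ (α + β) - 2 := sub_pos.2 (by
      simpa using Real.rpow_lt_rpow_of_exponent_lt (x := 2) (by norm_num) hαβ)
    have hlen : 0 < b - a := sub_pos.2 hab
    have h₁ : 0 ≤ (b - a) ^ β * Cf * Cg := by positivity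
    have h₂ : 0 ≤ (b - a) ^ (α + β) / (2 ^ (α + β) - 2) * Bf * Cg := by positivity
    calc |∫ x in a..b, f x * deriv g x|
        ≤ Bf * (Cg * (b - a) ^ β)
          + Cf * Cg / (2 ^ (α + β) - 2) * (b - a) ^ (α + β) := by linarith
      _ ≤ Bf * (Cg * (b - a) ^ β) + Cf * Cg / (2 ^ (α + β) - 2) * (b - a) ^ (α + β)
          + ((b - a) ^ β * Cf * Cg
            + (b - a) ^ (α + β) / (2 ^ (α + β) - 2) * Bf * Cg) := by linarith
      _ = _ := by ring
  · refine ⟨1 + 1 / (2 ^ (α + β) - 2), ?_⟩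
    rintro a b hab f g Cf Cg hf ⟨L, hL⟩ hg ⟨p, hp, hfp⟩
    have hCf := nonneg_of_forall_abs_sub_le_mul_rpow hab hf
    have ha := left_mem_Icc.2 hab.le
    have hgab := hg b (right_mem_Icc.2 hab.le) a ha
    rw [abs_of_pos (sub_pos.2 hab)] at hgab
    have hfa : |f a| ≤ Cf * (b - a) ^ α := by
      have h := hf a ha p hp
      rw [hfp, sub_zero, abs_sub_comm, abs_of_nonneg (sub_nonneg.2 hp.1)] at h
      refine h.trans ?_
      have := hp.1
      have := hp.2
      gcongr
    have hprod := mul_le_mul hfa hgab (abs_nonneg _) ((abs_nonneg _).trans hfa)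
    rw [← abs_mul] at hprod
    have hmain := abs_integral_mul_deriv_sub_le hα0 hαβ hab hf hL hg
    have htri := abs_sub_abs_le_abs_sub (∫ x in a..b, f x * deriv g x) (f a * (g b - g a))
    calc |∫ x in a..b, f x * deriv g x|
        ≤ Cf * (b - a) ^ α * (Cg * (b - a) ^ β)
          + Cf * Cg / (2 ^ (α + β) - 2) * (b - a) ^ (α + β) := by linarith
      _ = _ := by
        rw [Real.rpow_add (sub_pos.2 hab)]
        ring
end
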